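/- arXiv:2304.01579 — 4 statements merged into one kernel-verified Lean document; each statement's English description precedes it below -/
import Mathlib

section
/- Let m ≥ 0, n ≥ 1 be integers and μ ∈ ℝ, and set T̂_{m,n}^{(μ)}(z) = T_{m,n}^{(μ)}(−z). Then σ̂_{m,n}(z) = z · (d/dz)T̂_{m,n}^{(μ)}(z) / T̂_{m,n}^{(μ)}(z) − (m+1)n is a solution of S_V with parameters ν = (−m−1, n, −m−n−μ−1), at every z ≠ 0 with T̂_{m,n}^{(μ)}(z) ≠ 0. -/
noncomputable section

open Finset

/-- Generalized binomial coefficient `C(x, k)` for real `x`. -/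
def genBinom (x : ℝ) (k : ℕ) : ℝ :=
  (∏ i ∈ Finset.range k, (x - i)) / (Nat.factorial k)

/-- Associated Laguerre polynomial `L_n^{(α)}(z)`, with the convention `L_n^{(α)} = 0` for `n < 0`. -/
def lagL (n : ℤ) (α : ℝ) : ℝ → ℝ := fun z =>
  if n < 0 then 0
  else ∑ k ∈ Finset.range (n.toNat + 1),
    (-1 : ℝ) ^ k * genBinom ((n : ℝ) + α) (n.toNat - k) * z ^ k / (Nat.factorial k)

/-- Generalised Laguerre polynomial
`T_{m,n}^{(μ)}(z) = det[(d/dz)^{j+k} L_{m+n}^{(μ+1)}(z)]_{j,k=0}^{n-1}`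
(with `T_{m,0}^{(μ)} = 1`, the empty determinant). -/
def genLag (m : ℤ) (n : ℕ) (μ : ℝ) : ℝ → ℝ := fun z =>
  Matrix.det (Matrix.of fun j k : Fin n =>
    iteratedDeriv ((j : ℕ) + (k : ℕ)) (lagL (m + n) (μ + 1)) z)

/-- Wronskian `Wr(f_1, …, f_r)(z) = det[(d/dz)^{j-1} f_k(z)]`. -/
def wronskian {r : ℕ} (f : Fin r → ℝ → ℝ) : ℝ → ℝ := fun z =>
  Matrix.det (Matrix.of fun j k : Fin r => iteratedDeriv (j : ℕ) (f k) z)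

/-- The constant `c_{m,n} = (-1)^{n(2m+1+n)/2} ∏_{j=1}^n (j-1)!/(m+j)!`. -/
def cmn (m n : ℕ) : ℝ :=
  (-1 : ℝ) ^ (n * (2 * m + 1 + n) / 2) *
    ∏ j ∈ Finset.range n, (Nat.factorial j : ℝ) / (Nat.factorial (m + j + 1))

/-- `τ_{m,n}^{(μ)}(z) = det[(z d/dz)^{j+k} L_{m+n}^{(n+μ)}(z)]_{j,k=0}^{n-1}`. -/
def tauP (m : ℤ) (n : ℕ) (μ : ℝ) : ℝ → ℝ := fun z =>
  Matrix.det (Matrix.of fun j k : Fin n =>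
    ((fun (g : ℝ → ℝ) => fun t => t * deriv g t)^[(j : ℕ) + (k : ℕ)]
      (lagL (m + n) ((n : ℝ) + μ))) z)

/-- Hirota bilinear operator `D_z(f • g) = f' g - f g'`. -/
def hirota (f g : ℝ → ℝ) (z : ℝ) : ℝ := deriv f z * g z - f z * deriv g z

/-- Probabilists' Hermite polynomial `He_n` as a real function. -/
def He (n : ℕ) : ℝ → ℝ := fun z => Polynomial.aeval z (Polynomial.hermite n)

/-- The fifth Painlevé equation (with `δ = -1/2`) for `w` with parameters `(a, b, c)`,
holding at the point `z`. -/
def PV (a b c : ℝ) (w : ℝ → ℝ) (z : ℝ) : Prop :=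
  iteratedDeriv 2 w z =
    (1 / (2 * w z) + 1 / (w z - 1)) * (deriv w z) ^ 2
      - (1 / z) * deriv w z
      + (w z - 1) ^ 2 * (a * (w z) ^ 2 + b) / (z ^ 2 * w z)
      + c * w z / z
      - w z * (w z + 1) / (2 * (w z - 1))

/-- The Jimbo–Miwa–Okamoto `σ`-equation `S_V` with parameters `(ν₁, ν₂, ν₃)`,
holding at the point `z`. -/
def SV (ν₁ ν₂ ν₃ : ℝ) (σ : ℝ → ℝ) (z : ℝ) : Prop :=
  (z * iteratedDeriv 2 σ z) ^ 2 =
    (2 * (deriv σ z) ^ 2 + (ν₁ + ν₂ + ν₃ - z) * deriv σ z + σ z) ^ 2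
      - 4 * deriv σ z * (deriv σ z + ν₁) * (deriv σ z + ν₂) * (deriv σ z + ν₃)

/-- algebraic step -/
theorem step_B (t s s1 X X1 W a1 a2 a3 : ℝ) (ht : t ≠ 0)
    (hX1 : X1 = X + t * (s1 - s) - W + a3 + 1 - a1 - a2)
    (hB : X * W * (W - t) + t * W * ((s + a1) * (s + a2) - s * (s + a3)) + t ^ 2 * (s * (s + a3)) = 0)
    (hC : t * (s1 - s) = W + a3 * (W - t) - 2 * s * t - W * (a1 + a2) - W * (W - t)) :
    X1 * W * (W - t) + t * W * ((s1 + (a1 - 1)) * (s1 + (a2 - 1)) - s1 * (s1 + a3))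
      + t ^ 2 * (s1 * (s1 + a3)) = 0 := by
  have h1 : s1 = s + (W + a3 * (W - t) - 2 * s * t - W * (a1 + a2) - W * (W - t)) / t := by
    field_simp; linear_combination hC
  rw [hC] at hX1
  subst hX1
  subst h1
  field_simp
  linear_combination t * hB

theorem step_A (t s s1 r r1 X X1 W a1 a2 a3 : ℝ) (ht : t ≠ 0)
    (hX1 : X1 = X + t * (s1 - s) - W + a3 + 1 - a1 - a2)
    (hA : t * (t * r) = 2 * X * W + t * ((s + a1) * (s + a2) - s * (s + a3) - X))
    (hC : t * (s1 - s) = W + a3 * (W - t) - 2 * s * t - W * (a1 + a2) - W * (W - t))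
    (hC' : (s1 - s) + t * (r1 - r) = (s1 - s) + a3 * ((s1 - s) - 1) - 2 * s - 2 * t * r
      - (s1 - s) * (a1 + a2) - (s1 - s) * (W - t) - W * ((s1 - s) - 1)) :
    t * (t * r1) = - 2 * X1 * W - t * ((s1 + (a1 - 1)) * (s1 + (a2 - 1)) - s1 * (s1 + a3) - X1) := by
  have h1 : s1 = s + (W + a3 * (W - t) - 2 * s * t - W * (a1 + a2) - W * (W - t)) / t := by
    field_simp; linear_combination hC
  rw [hC] at hX1
  have hr : t * (t * r1) = - t * (t * r) + t * (a3 * ((s1 - s) - 1) - 2 * s 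
      - (s1 - s) * (a1 + a2) - (s1 - s) * (W - t) - W * ((s1 - s) - 1)) := by
    linear_combination t * hC'
  rw [hr]
  have hr2 : - t * (t * r) = - (2 * X * W + t * ((s + a1) * (s + a2) - s * (s + a3) - X)) := by
    linear_combination - hA
  rw [hr2]
  subst hX1
  subst h1
  field_simp
  ring

theorem step_C (t s1 r1 X1 W W1 D D1 b a3 u : ℝ) (hX : X1 ≠ 0)
    (hT : t * (t * r1) = X1 * (W1 - W))
    (hE : X1 * (W1 + W - t) = - t * u)
    (hE' : t * r1 * (W1 + W - t) + X1 * (D1 + D - 1) = - u - t * ((b - a3) * r1))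
    (hC : t * D = W + a3 * (W - t) - 2 * (s1 - D) * t - W * (b + 2) - W * (W - t)) :
    t * D1 = W1 + a3 * (W1 - t) - 2 * s1 * t - W1 * b - W1 * (W1 - t) := by
  apply mul_left_cancel₀ hX
  linear_combination t * hE' - (W1 + W - t) * hT - hE - (b - a3) * hT + X1 * hC

open Polynomial in
def lagPoly (N : ℕ) (α : ℝ) : Polynomial ℝ :=
  ∑ k ∈ Finset.range (N + 1),
    Polynomial.C ((-1 : ℝ) ^ k * genBinom ((N : ℝ) + α) (N - k) / (Nat.factorial k)) * X ^ k

theorem genBinom_succ (x : ℝ) (j : ℕ) : genBinom x (j + 1) * (j + 1) = genBinom x j * (x - j) := by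
  unfold genBinom
  rw [Finset.prod_range_succ, Nat.factorial_succ]
  have : ((j.factorial : ℕ) : ℝ) ≠ 0 := by positivity
  push_cast
  field_simp

theorem lagPoly_coeff (N : ℕ) (α : ℝ) (k : ℕ) : (lagPoly N α).coeff k =
    if k < N + 1 then (-1 : ℝ) ^ k * genBinom ((N : ℝ) + α) (N - k) / (Nat.factorial k) else 0 := by
  unfold lagPoly
  simp only [Polynomial.finsetSum_coeff, Polynomial.coeff_C_mul_X_pow]
  simp

theorem lagPoly_coeff_succ (N : ℕ) (α : ℝ) (k : ℕ) :
    ((k : ℝ) + 1) * (k + α + 1) * (lagPoly N α).coeff (k + 1)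
      = - (N - k) * (lagPoly N α).coeff k := by
  rw [lagPoly_coeff, lagPoly_coeff]
  rcases lt_trichotomy k N with h | h | h
  · obtain ⟨j, rfl⟩ : ∃ j, N = k + 1 + j := ⟨N - (k + 1), by omega⟩
    rw [if_pos (by omega), if_pos (by omega)]
    have e1 : k + 1 + j - (k + 1) = j := by omega
    have e2 : k + 1 + j - k = j + 1 := by omega
    rw [e1, e2, Nat.factorial_succ]
    have hb := genBinom_succ (((k + 1 + j : ℕ) : ℝ) + α) j
    have : ((k.factorial : ℕ) : ℝ) ≠ 0 := by positivity
    have : ((k : ℝ) + 1) ≠ 0 := by positivity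
    push_cast at hb ⊢
    field_simp
    rw [pow_succ]
    linear_combination (-1 : ℝ) ^ k * hb
  · subst h; simp
  · rw [if_neg (by omega), if_neg (by omega)]; simp

open Polynomial in
theorem lagPoly_ode (N : ℕ) (α : ℝ) :
    X * derivative (derivative (lagPoly N α)) + (Polynomial.C (α + 1) - X) * derivative (lagPoly N α)
      + Polynomial.C (N : ℝ) * lagPoly N α = 0 := by
  ext k
  have h := lagPoly_coeff_succ N α k
  rw [sub_mul]
  rcases k with _ | k
  · simp only [coeff_add, coeff_sub, coeff_C_mul, coeff_X_mul_zero, coeff_derivative, coeff_zero]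
    push_cast at h ⊢
    linear_combination h
  · simp only [coeff_add, coeff_sub, coeff_C_mul, coeff_X_mul, coeff_derivative, coeff_zero]
    push_cast at h ⊢
    linear_combination h

theorem lagPoly_coeff_self (N : ℕ) (α : ℝ) : (lagPoly N α).coeff N ≠ 0 := by
  rw [lagPoly_coeff, if_pos (by omega)]
  have : genBinom (↑N + α) (N - N) = 1 := by simp [genBinom]
  rw [this]
  have : ((N.factorial : ℕ) : ℝ) ≠ 0 := by positivity
  have h2 : (-1 : ℝ) ^ N ≠ 0 := pow_ne_zero _ (by norm_num)
  rw [mul_one]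
  exact div_ne_zero h2 this

theorem lagPoly_natDegree (N : ℕ) (α : ℝ) : (lagPoly N α).natDegree = N := by
  apply le_antisymm
  · rw [Polynomial.natDegree_le_iff_coeff_eq_zero]
    intro k hk
    rw [lagPoly_coeff, if_neg (by omega)]
  · exact Polynomial.le_natDegree_of_ne_zero (lagPoly_coeff_self N α)

theorem lagL_eq (N : ℕ) (α : ℝ) : lagL (N : ℤ) α = fun z => (lagPoly N α).eval z := by
  funext z
  unfold lagL lagPoly
  rw [if_neg (by omega), Polynomial.eval_finsetSum]
  simp only [Int.toNat_natCast, Int.cast_natCast, Polynomial.eval_mul, Polynomial.eval_C,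
    Polynomial.eval_pow, Polynomial.eval_X]
  apply Finset.sum_congr rfl
  intro k _
  ring

theorem iteratedDeriv_poly (p : Polynomial ℝ) (k : ℕ) :
    iteratedDeriv k (fun z => p.eval z) = fun z => (Polynomial.derivative^[k] p).eval z := by
  induction k with
  | zero => simp
  | succ k ih =>
    rw [iteratedDeriv_succ, ih]
    funext z
    rw [Polynomial.deriv, Function.iterate_succ_apply']

/-- Determinant with row and column labels. -/
def labDet {n : ℕ} (p : Polynomial ℝ) (r c : Fin n → ℕ) : Polynomial ℝ :=
  Matrix.det (Matrix.of fun i j : Fin n => Polynomial.derivative^[r i + c j] p)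

/-- Hankel determinant. -/
def hank (p : Polynomial ℝ) (n : ℕ) : Polynomial ℝ :=
  labDet p (fun i : Fin n => (i : ℕ)) (fun i : Fin n => (i : ℕ))

theorem genLag_eq (m n : ℕ) (μ : ℝ) (z : ℝ) :
    genLag (m : ℤ) n μ z = (hank (lagPoly (m + n) (μ + 1)) n).eval z := by
  unfold genLag hank labDet
  have h : ((m : ℤ) + (n : ℤ)) = ((m + n : ℕ) : ℤ) := by push_cast; rfl
  rw [h, lagL_eq]
  simp only [iteratedDeriv_poly]
  rw [← Polynomial.coe_evalRingHom, RingHom.map_det]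
  rfl

theorem labDet_comm {n : ℕ} (p : Polynomial ℝ) (r c : Fin n → ℕ) : labDet p r c = labDet p c r := by
  unfold labDet
  rw [← Matrix.det_transpose]
  congr 1
  ext i j : 2
  simp [add_comm]

theorem labDet_derivative {n : ℕ} (p : Polynomial ℝ) (r c : Fin n → ℕ) :
    Polynomial.derivative (labDet p r c)
      = ∑ j, labDet p r (Function.update c j (c j + 1)) := by
  unfold labDet
  simp only [Matrix.det_apply, Matrix.of_apply]
  rw [Polynomial.derivative_sum, Finset.sum_comm]
  apply Finset.sum_congr rfl
  intro g _
  rw [Polynomial.derivative_smul, Polynomial.derivative_prod_finset, Finset.smul_sum]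
  apply Finset.sum_congr rfl
  intro j _
  congr 1
  rw [← Finset.prod_erase_mul _ _ (Finset.mem_univ j)]
  congr 1
  · apply Finset.prod_congr rfl
    intro i hi
    rw [Function.update_of_ne (Finset.ne_of_mem_erase hi)]
  · rw [Function.update_self, ← Function.iterate_succ_apply' (f := Polynomial.derivative)]
    rfl

/-- labels `0, …, k-1, a`. -/
def labs (k a : ℕ) : Fin (k + 1) → ℕ := fun i => if (i : ℕ) < k then i else a

theorem labDet_derivative_last {k : ℕ} (p : Polynomial ℝ) (r : Fin (k + 1) → ℕ) :
    Polynomial.derivative (labDet p r (fun i => (i : ℕ))) = labDet p r (labs k (k + 1)) := by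
  rw [labDet_derivative, Finset.sum_eq_single (Fin.last k)]
  · congr 1
    funext i
    unfold labs
    by_cases h : i = Fin.last k
    · subst h; simp
    · rw [Function.update_of_ne h, if_pos (Fin.val_lt_last h)]
  · intro j _ hj
    have hj' := Fin.val_lt_last hj
    unfold labDet
    apply Matrix.det_zero_of_column_eq (i := j) (j := ⟨j + 1, by omega⟩)
    · intro h; have := congrArg Fin.val h; simp at this
    · intro i
      simp only [Matrix.of_apply]
      rw [Function.update_self, Function.update_of_ne]
      intro h; have := congrArg Fin.val h; simp at this
  · simp

theorem labs_self (k : ℕ) : (fun i : Fin (k + 1) => (i : ℕ)) = labs k k := by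
  funext i
  unfold labs
  split_ifs with h
  · rfl
  · omega

theorem hank_d1 (p : Polynomial ℝ) (k : ℕ) :
    Polynomial.derivative (hank p (k + 1)) = labDet p (labs k k) (labs k (k + 1)) := by
  unfold hank
  rw [labDet_derivative_last, labs_self]

theorem hank_d2 (p : Polynomial ℝ) (k : ℕ) :
    Polynomial.derivative (Polynomial.derivative (hank p (k + 1)))
      = labDet p (labs k (k + 1)) (labs k (k + 1)) := by
  rw [hank_d1, labDet_comm, ← labs_self, labDet_derivative_last]

/-- Schur complement formula in index form. -/
theorem schur_index {k q : ℕ} (M : Matrix (Fin k ⊕ Fin q) (Fin k ⊕ Fin q) ℝ)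
    (A : Matrix (Fin k) (Fin k) ℝ) (hA : M.toBlocks₁₁ = A) (h : A.det ≠ 0) :
    M.det = A.det * Matrix.det (Matrix.of fun i j : Fin q =>
      M (Sum.inr i) (Sum.inr j) - dotProduct
        (Matrix.vecMul (fun a => M (Sum.inr i) (Sum.inl a)) A⁻¹)
        (fun b => M (Sum.inl b) (Sum.inr j))) := by
  have : Invertible A := A.invertibleOfIsUnitDet (isUnit_iff_ne_zero.mpr h)
  subst hA
  conv_lhs => rw [← Matrix.fromBlocks_toBlocks M]
  rw [Matrix.det_fromBlocks₁₁, Matrix.invOf_eq_nonsing_inv]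
  rfl

/-- the Schur complement entry -/
def sEnt (k : ℕ) (p : Polynomial ℝ) (t : ℝ) (a b : ℕ) : ℝ :=
  (Polynomial.derivative^[a + b] p).eval t -
    dotProduct (Matrix.vecMul (fun i : Fin k => (Polynomial.derivative^[a + (i : ℕ)] p).eval t)
      (Matrix.of fun i j : Fin k => (Polynomial.derivative^[(i : ℕ) + (j : ℕ)] p).eval t)⁻¹)
      (fun i : Fin k => (Polynomial.derivative^[(i : ℕ) + b] p).eval t)

theorem eval_labDet {n : ℕ} (p : Polynomial ℝ) (r c : Fin n → ℕ) (t : ℝ) :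
    (labDet p r c).eval t =
      Matrix.det (Matrix.of fun i j : Fin n => (Polynomial.derivative^[r i + c j] p).eval t) := by
  unfold labDet
  rw [← Polynomial.coe_evalRingHom, RingHom.map_det]
  rfl

theorem labDet_schur {k q : ℕ} (p : Polynomial ℝ) (t : ℝ) (h : (hank p k).eval t ≠ 0)
    (r c : Fin (k + q) → ℕ) (hr : ∀ i : Fin k, r (Fin.castAdd q i) = i)
    (hc : ∀ i : Fin k, c (Fin.castAdd q i) = i) :
    (labDet p r c).eval t = (hank p k).eval t * Matrix.det (Matrix.of fun i j : Fin q =>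
      sEnt k p t (r (Fin.natAdd k i)) (c (Fin.natAdd k j))) := by
  unfold hank at h ⊢
  rw [eval_labDet] at h ⊢
  rw [eval_labDet]
  rw [← Matrix.det_submatrix_equiv_self (finSumFinEquiv (m := k) (n := q)), schur_index _ _ rfl]
  · have e : (Matrix.toBlocks₁₁ ((Matrix.of fun i j : Fin (k + q) =>
        (Polynomial.derivative^[r i + c j] p).eval t).submatrix
          finSumFinEquiv finSumFinEquiv)) =
        Matrix.of fun i j : Fin k => (Polynomial.derivative^[(i : ℕ) + (j : ℕ)] p).eval t := by
      ext i j
      simp [Matrix.toBlocks₁₁, hr, hc]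
    rw [e]
    congr 2
    ext i j
    simp [sEnt, hr, hc]
  · convert h using 2
    ext i j
    simp [Matrix.toBlocks₁₁, hr, hc]

theorem labDet_labs (k : ℕ) (p : Polynomial ℝ) (t : ℝ) (h : (hank p k).eval t ≠ 0) (a b : ℕ) :
    (labDet p (labs k a) (labs k b)).eval t = (hank p k).eval t * sEnt k p t a b := by
  rw [labDet_schur (q := 1) p t h _ _ (by intro i; simp [labs]) (by intro i; simp [labs])]
  simp [labs]

theorem toda_poly (p : Polynomial ℝ) (k : ℕ) (h0 : hank p k ≠ 0) :
    hank p (k + 2) * hank p k = hank p (k + 1) *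
      Polynomial.derivative (Polynomial.derivative (hank p (k + 1)))
        - Polynomial.derivative (hank p (k + 1)) ^ 2 := by
  apply mul_left_cancel₀ h0
  apply Polynomial.funext
  intro t
  by_cases h : (hank p k).eval t = 0
  · simp only [Polynomial.eval_mul, h, zero_mul]
  · simp only [Polynomial.eval_mul, Polynomial.eval_sub, Polynomial.eval_pow]
    congr 1
    rw [hank_d2, hank_d1]
    have e1 : hank p (k + 1) = labDet p (labs k k) (labs k k) := by
      unfold hank; rw [labs_self]
    have e3 := labDet_labs k p t h k (k + 1)
    have e4 := labDet_labs k p t h (k + 1) k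
    rw [labDet_comm, e3] at e4
    rw [e1, labDet_labs k p t h, labDet_labs k p t h, e3]
    have e2 : (hank p (k + 2)).eval t = _ :=
      labDet_schur (q := 2) p t h _ _ (by intro i; simp) (by intro i; simp)
    rw [e2, Matrix.det_fin_two]
    simp only [Matrix.of_apply, Fin.val_natAdd, Fin.val_zero, Fin.val_one, add_zero]
    have e5 := mul_left_cancel₀ h e4
    rw [← e5]
    ring

theorem hank_zero (p : Polynomial ℝ) : hank p 0 = 1 := by
  unfold hank labDet; simp

theorem hank_one (p : Polynomial ℝ) : hank p 1 = p := by
  unfold hank labDet; simp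

/-- degrees of the Hankel determinants -/
theorem hank_degree (p : Polynomial ℝ) (N : ℕ) (hp : p ≠ 0) (hd : p.natDegree = N) (k : ℕ)
    (hk : k ≤ N) :
    hank p k ≠ 0 ∧ (hank p k).natDegree + k * k = k * (N + 1) ∧
    hank p (k + 1) ≠ 0 ∧ (hank p (k + 1)).natDegree + (k + 1) * (k + 1) = (k + 1) * (N + 1) := by
  induction k with
  | zero =>
    rw [hank_zero, zero_add, hank_one]
    refine ⟨one_ne_zero, by simp, hp, by omega⟩
  | succ k ih =>
    obtain ⟨h1, h2, h3, h4⟩ := ih (by omega)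
    refine ⟨h3, h4, ?_⟩
    have ht := toda_poly p k h1
    set T := hank p (k + 1) with hT
    set d := T.natDegree with hdd
    have hd1 : 2 ≤ d + 1 := by
      obtain ⟨j, rfl⟩ : ∃ j, N = k + 1 + j := ⟨N - (k + 1), by omega⟩
      nlinarith
    obtain ⟨e, he⟩ : ∃ e, d = e + 1 := ⟨d - 1, by omega⟩
    have hlc : T.coeff d ≠ 0 := by
      rw [hdd, Polynomial.coeff_natDegree]; exact Polynomial.leadingCoeff_ne_zero.mpr h3
    have dT' : (Polynomial.derivative T).natDegree ≤ e := by
      have := Polynomial.natDegree_derivative_le T; omega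
    have dT'' : (Polynomial.derivative (Polynomial.derivative T)).natDegree ≤ e - 1 := by
      have := Polynomial.natDegree_derivative_le (Polynomial.derivative T); omega
    have c1 : (Polynomial.derivative T ^ 2).coeff (2 * e) = (T.coeff d * d) ^ 2 := by
      rw [pow_two, two_mul, Polynomial.coeff_mul_add_eq_of_natDegree_le dT' dT',
        Polynomial.coeff_derivative, he]
      push_cast; ring
    have c2 : (T * Polynomial.derivative (Polynomial.derivative T)).coeff (2 * e)
        = T.coeff d ^ 2 * d * (d - 1) := by
      rcases e with _ | e
      · have : Polynomial.derivative (Polynomial.derivative T) = 0 := by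
          have h0 : (Polynomial.derivative T).natDegree = 0 := by omega
          exact Polynomial.derivative_of_natDegree_zero h0
        rw [this, he]; simp
      · have : 2 * (e + 1) = d + e := by omega
        rw [this, Polynomial.coeff_mul_add_eq_of_natDegree_le le_rfl (by simpa using dT''),
          Polynomial.coeff_derivative, Polynomial.coeff_derivative, ← hdd, he]
        push_cast; ring
    have hcoef : (hank p (k + 2) * hank p k).coeff (2 * e) ≠ 0 := by
      rw [ht, Polynomial.coeff_sub, c1, c2]
      have : T.coeff d ^ 2 * d * (d - 1) - (T.coeff d * d) ^ 2 = - (T.coeff d ^ 2 * d) := by ring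
      rw [this]
      have : (d : ℝ) ≠ 0 := by rw [he]; positivity
      exact neg_ne_zero.mpr (mul_ne_zero (pow_ne_zero _ hlc) this)
    have hne : hank p (k + 2) * hank p k ≠ 0 := by
      intro h; rw [h] at hcoef; simp at hcoef
    have h5 := left_ne_zero_of_mul hne
    refine ⟨h5, ?_⟩
    have hdeg : (hank p (k + 2) * hank p k).natDegree = 2 * e := by
      apply le_antisymm
      · rw [ht]
        refine (Polynomial.natDegree_sub_le _ _).trans (max_le ?_ ?_)
        · rcases e with _ | e
          · have : Polynomial.derivative (Polynomial.derivative T) = 0 := by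
              have h0 : (Polynomial.derivative T).natDegree = 0 := by omega
              exact Polynomial.derivative_of_natDegree_zero h0
            rw [this]; simp
          · refine Polynomial.natDegree_mul_le.trans ?_
            omega
        · refine Polynomial.natDegree_pow_le.trans ?_
          omega
      · exact Polynomial.le_natDegree_of_ne_zero hcoef
    rw [Polynomial.natDegree_mul h5 h1] at hdeg
    have : k + 1 + 1 = k + 2 := rfl
    rw [this]
    nlinarith

/-! ### Logarithmic derivative data of a polynomial -/

def gg (T : Polynomial ℝ) (t : ℝ) : ℝ := (Polynomial.derivative T).eval t / T.eval t

def ggb (T : Polynomial ℝ) (t : ℝ) : ℝ :=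
  (Polynomial.derivative (Polynomial.derivative T)).eval t / T.eval t

def ggc (T : Polynomial ℝ) (t : ℝ) : ℝ :=
  (Polynomial.derivative (Polynomial.derivative (Polynomial.derivative T))).eval t / T.eval t

def ss (T : Polynomial ℝ) (t : ℝ) : ℝ := gg T t + t * (ggb T t - gg T t ^ 2)

def rr (T : Polynomial ℝ) (t : ℝ) : ℝ :=
  2 * (ggb T t - gg T t ^ 2) + t * (ggc T t - 3 * gg T t * ggb T t + 2 * gg T t ^ 3)

def xx (T : Polynomial ℝ) (t : ℝ) : ℝ := t ^ 2 * (ggb T t - gg T t ^ 2)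

theorem gg_hasDerivAt (T : Polynomial ℝ) (t : ℝ) (h : T.eval t ≠ 0) :
    HasDerivAt (gg T) (ggb T t - gg T t ^ 2) t := by
  have := ((Polynomial.derivative T).hasDerivAt t).div (T.hasDerivAt t) h
  refine HasDerivAt.congr_deriv this ?_
  unfold ggb gg
  field_simp

theorem ggb_hasDerivAt (T : Polynomial ℝ) (t : ℝ) (h : T.eval t ≠ 0) :
    HasDerivAt (ggb T) (ggc T t - gg T t * ggb T t) t := by
  have := ((Polynomial.derivative (Polynomial.derivative T)).hasDerivAt t).div (T.hasDerivAt t) h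
  refine HasDerivAt.congr_deriv this ?_
  unfold ggc ggb gg
  field_simp

theorem y_hasDerivAt (T : Polynomial ℝ) (t : ℝ) (h : T.eval t ≠ 0) :
    HasDerivAt (fun x => x * gg T x) (ss T t) t := by
  have := (hasDerivAt_id t).mul (gg_hasDerivAt T t h)
  refine HasDerivAt.congr_deriv this ?_
  unfold ss; simp

theorem ss_hasDerivAt (T : Polynomial ℝ) (t : ℝ) (h : T.eval t ≠ 0) :
    HasDerivAt (ss T) (rr T t) t := by
  have := (gg_hasDerivAt T t h).add ((hasDerivAt_id t).mul
    ((ggb_hasDerivAt T t h).sub ((gg_hasDerivAt T t h).pow 2)))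
  refine HasDerivAt.congr_deriv this ?_
  unfold rr; simp; ring

theorem xx_eq (T : Polynomial ℝ) (t : ℝ) : xx T t = t * ss T t - t * gg T t := by
  unfold xx ss; ring

theorem xx_hasDerivAt (T : Polynomial ℝ) (t : ℝ) (h : T.eval t ≠ 0) :
    HasDerivAt (xx T) (t * rr T t) t := by
  have := ((hasDerivAt_id t).mul (ss_hasDerivAt T t h)).sub (y_hasDerivAt T t h)
  rw [funext (xx_eq T)]
  refine HasDerivAt.congr_deriv this ?_
  simp

theorem toda_alg (a b c a1 b1 c1 b2 b3 t : ℝ) (ha : a ≠ 0) (hb : b ≠ 0) (hc : c ≠ 0)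
    (h : c * a = b * b2 - b1 ^ 2) (h' : c1 * a + c * a1 = b * b3 - b1 * b2) :
    t * (t * (2 * (b2 / b - (b1 / b) ^ 2) +
        t * (b3 / b - 3 * (b1 / b) * (b2 / b) + 2 * (b1 / b) ^ 3)))
      = t ^ 2 * (b2 / b - (b1 / b) ^ 2) * (t * (c1 / c) + t * (a1 / a) - 2 * (t * (b1 / b)) + 2) := by
  have hG : b2 / b - (b1 / b) ^ 2 = c * a / b ^ 2 := by
    rw [h]; field_simp
  have hG' : b3 / b - 3 * (b1 / b) * (b2 / b) + 2 * (b1 / b) ^ 3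
      = (c1 * a + c * a1) / b ^ 2 - 2 * (c * a) * b1 / b ^ 3 := by
    rw [h, h']; field_simp; ring
  rw [hG, hG']
  field_simp
  ring

theorem deriv_zero_of_eventually (F : ℝ → ℝ) (d t : ℝ) (hF : HasDerivAt F d t)
    (h : ∀ᶠ x in nhds t, F x = 0) : d = 0 := by
  have h0 : HasDerivAt F 0 t := by
    have : HasDerivAt (fun _ : ℝ => (0 : ℝ)) 0 t := hasDerivAt_const t 0
    exact this.congr_of_eventuallyEq h
  exact hF.unique h0

theorem diff_C (s s1 W : ℝ → ℝ) (r r1 t a b : ℝ) (hs : HasDerivAt s r t) (hs1 : HasDerivAt s1 r1 t)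
    (hW : HasDerivAt W (s1 t - s t) t)
    (h : ∀ᶠ x in nhds t, x * (s1 x - s x)
      = W x + a * (W x - x) - 2 * s x * x - W x * b - W x * (W x - x)) :
    (s1 t - s t) + t * (r1 - r) = (s1 t - s t) + a * ((s1 t - s t) - 1) - 2 * s t - 2 * t * r
      - (s1 t - s t) * b - (s1 t - s t) * (W t - t) - W t * ((s1 t - s t) - 1) := by
  have hi := hasDerivAt_id t
  have hF := (hi.mul (hs1.sub hs)).sub
    ((((hW.add ((hW.sub hi).const_mul a)).sub ((hs.const_mul 2).mul hi)).sub
      (hW.mul_const b)).sub (hW.mul (hW.sub hi)))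
  have := deriv_zero_of_eventually _ _ _ hF (by
    filter_upwards [h] with x hx
    simp only [Pi.sub_apply, Pi.mul_apply, Pi.add_apply, id]
    linear_combination hx)
  simp only [Pi.sub_apply, id] at this
  linear_combination this

theorem diff_E (X s W W1 : ℝ → ℝ) (r D D1 t b1 b2 a : ℝ) (hX : HasDerivAt X (t * r) t)
    (hs : HasDerivAt s r t) (hW : HasDerivAt W D t) (hW1 : HasDerivAt W1 D1 t)
    (h : ∀ᶠ x in nhds t, X x * (W1 x + W x - x)
      = - x * ((s x + b1) * (s x + b2) - s x * (s x + a))) :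
    t * r * (W1 t + W t - t) + X t * (D1 + D - 1)
      = - ((s t + b1) * (s t + b2) - s t * (s t + a)) - t * ((b1 + b2 - a) * r) := by
  have hi := hasDerivAt_id t
  have hF := (hX.mul ((hW1.add hW).sub hi)).add
    (hi.mul (((hs.add_const b1).mul (hs.add_const b2)).sub (hs.mul (hs.add_const a))))
  have := deriv_zero_of_eventually _ _ _ hF (by
    filter_upwards [h] with x hx
    simp only [Pi.sub_apply, Pi.mul_apply, Pi.add_apply, id]
    linear_combination hx)
  simp only [Pi.sub_apply, Pi.mul_apply, Pi.add_apply, id] at this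
  linear_combination this

/-! ### The main induction -/

/-- product of everything that should not vanish -/
def badPoly (p : Polynomial ℝ) (N : ℕ) : Polynomial ℝ :=
  Polynomial.X * ∏ j ∈ Finset.range (N + 2), hank p j

theorem badPoly_ne (p : Polynomial ℝ) (N : ℕ) (hp : p ≠ 0) (hd : p.natDegree = N) :
    badPoly p N ≠ 0 := by
  apply mul_ne_zero Polynomial.X_ne_zero
  rw [Finset.prod_ne_zero_iff]
  intro j hj
  rw [Finset.mem_range] at hj
  rcases j with _ | j
  · rw [hank_zero]; exact one_ne_zero
  · exact (hank_degree p N hp hd j (by omega)).2.2.1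

theorem bad_t {p : Polynomial ℝ} {N : ℕ} {t : ℝ} (h : (badPoly p N).eval t ≠ 0) : t ≠ 0 := by
  rintro rfl
  simp [badPoly] at h

theorem bad_T {p : Polynomial ℝ} {N : ℕ} {t : ℝ} (h : (badPoly p N).eval t ≠ 0) (j : ℕ)
    (hj : j ≤ N + 1) : (hank p j).eval t ≠ 0 := by
  intro h0
  apply h
  unfold badPoly
  rw [Polynomial.eval_mul, Polynomial.eval_prod, Finset.prod_eq_zero (i := j), mul_zero]
  · rw [Finset.mem_range]; omega
  · exact h0

def ww (p : Polynomial ℝ) (α : ℝ) (k : ℕ) (t : ℝ) : ℝ :=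
  t * gg (hank p (k + 1)) t - t * gg (hank p k) t + 2 * k + α

theorem ww_hasDerivAt (p : Polynomial ℝ) (α : ℝ) (k : ℕ) (t : ℝ) (h : (hank p k).eval t ≠ 0)
    (h1 : (hank p (k + 1)).eval t ≠ 0) :
    HasDerivAt (ww p α k) (ss (hank p (k + 1)) t - ss (hank p k) t) t := by
  have := (((y_hasDerivAt _ t h1).sub (y_hasDerivAt _ t h)).add_const (2 * (k : ℝ))).add_const α
  exact this

theorem toda_pt (p : Polynomial ℝ) (α : ℝ) (k : ℕ) (t : ℝ) (h : (hank p k).eval t ≠ 0)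
    (h1 : (hank p (k + 1)).eval t ≠ 0) (h2 : (hank p (k + 2)).eval t ≠ 0) :
    t * (t * rr (hank p (k + 1)) t) = xx (hank p (k + 1)) t * (ww p α (k + 1) t - ww p α k t) := by
  have h0 : hank p k ≠ 0 := by intro h0; rw [h0] at h; simp at h
  have e := toda_poly p k h0
  have e1 := congrArg (Polynomial.eval t) e
  have e2 := congrArg (fun q => Polynomial.eval t (Polynomial.derivative q)) e
  simp only [Polynomial.derivative_mul, Polynomial.derivative_sub, Polynomial.derivative_pow,
    Polynomial.eval_mul, Polynomial.eval_sub, Polynomial.eval_pow, Polynomial.eval_add,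
    Polynomial.eval_C] at e1 e2
  have := toda_alg _ _ _ ((Polynomial.derivative (hank p k)).eval t) _
    ((Polynomial.derivative (hank p (k + 2))).eval t) _
    ((Polynomial.derivative (Polynomial.derivative (Polynomial.derivative
      (hank p (k + 1))))).eval t) t h h1 h2 e1 (by
        norm_num at e2
        linear_combination e2)
  unfold ww xx rr gg ggb ggc
  rw [this]
  have e3 : k + 1 + 1 = k + 2 := rfl
  rw [e3]
  push_cast
  ring

theorem xx_ne (p : Polynomial ℝ) (k : ℕ) (t : ℝ) (ht : t ≠ 0) (h : (hank p k).eval t ≠ 0)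
    (h1 : (hank p (k + 1)).eval t ≠ 0) (h2 : (hank p (k + 2)).eval t ≠ 0) :
    xx (hank p (k + 1)) t ≠ 0 := by
  have h0 : hank p k ≠ 0 := by intro h0; rw [h0] at h; simp at h
  have e1 := congrArg (Polynomial.eval t) (toda_poly p k h0)
  simp only [Polynomial.eval_mul, Polynomial.eval_sub, Polynomial.eval_pow] at e1
  have : xx (hank p (k + 1)) t = t ^ 2 * ((hank p (k + 2)).eval t * (hank p k).eval t)
      / (hank p (k + 1)).eval t ^ 2 := by
    rw [e1]; unfold xx gg ggb; field_simp
  rw [this]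
  positivity

/-- The three relations linking levels `k` and `k+1`. -/
def RelA (N : ℕ) (α : ℝ) (p : Polynomial ℝ) (k : ℕ) (t : ℝ) : Prop :=
  t * (t * rr (hank p k) t) = 2 * xx (hank p k) t * ww p α k t
    + t * ((ss (hank p k) t + (N + 1 - k)) * (ss (hank p k) t + (-k))
      - ss (hank p k) t * (ss (hank p k) t + (N + α)) - xx (hank p k) t)

def RelB (N : ℕ) (α : ℝ) (p : Polynomial ℝ) (k : ℕ) (t : ℝ) : Prop :=
  xx (hank p k) t * ww p α k t * (ww p α k t - t)
    + t * ww p α k t * ((ss (hank p k) t + (N + 1 - k)) * (ss (hank p k) t + (-k))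
      - ss (hank p k) t * (ss (hank p k) t + (N + α)))
    + t ^ 2 * (ss (hank p k) t * (ss (hank p k) t + (N + α))) = 0

def RelC (N : ℕ) (α : ℝ) (p : Polynomial ℝ) (k : ℕ) (t : ℝ) : Prop :=
  t * (ss (hank p (k + 1)) t - ss (hank p k) t) =
    ww p α k t + (N + α) * (ww p α k t - t) - 2 * ss (hank p k) t * t
      - ww p α k t * ((N + 1 - k) + (-k)) - ww p α k t * (ww p α k t - t)

theorem rel_zero (N : ℕ) (α : ℝ) (t : ℝ) (h : (lagPoly N α).eval t ≠ 0) :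
    RelA N α (lagPoly N α) 0 t ∧ RelB N α (lagPoly N α) 0 t ∧ RelC N α (lagPoly N α) 0 t := by
  have g0 : gg (hank (lagPoly N α) 0) t = 0 := by rw [hank_zero]; simp [gg]
  have gb0 : ggb (hank (lagPoly N α) 0) t = 0 := by rw [hank_zero]; simp [ggb]
  have gc0 : ggc (hank (lagPoly N α) 0) t = 0 := by rw [hank_zero]; simp [ggc]
  have s0 : ss (hank (lagPoly N α) 0) t = 0 := by simp [ss, g0, gb0]
  have r0 : rr (hank (lagPoly N α) 0) t = 0 := by simp [rr, g0, gb0, gc0]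
  have x0 : xx (hank (lagPoly N α) 0) t = 0 := by simp [xx, g0, gb0]
  refine ⟨?_, ?_, ?_⟩
  · unfold RelA; rw [s0, r0, x0]; simp
  · unfold RelB; rw [s0, x0]; simp
  · unfold RelC ww
    rw [s0, g0, zero_add, hank_one]
    have ode := congrArg (Polynomial.eval t) (lagPoly_ode N α)
    simp only [Polynomial.eval_mul, Polynomial.eval_sub, Polynomial.eval_add, Polynomial.eval_C,
      Polynomial.eval_X, Polynomial.eval_zero] at ode
    have hb : t * ggb (lagPoly N α) t = - (α + 1 - t) * gg (lagPoly N α) t - N := by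
      unfold ggb gg
      field_simp
      linear_combination ode
    unfold ss
    push_cast
    linear_combination t * hb

theorem rel_all (N : ℕ) (α : ℝ) (k : ℕ) (hk : k ≤ N) :
    ∀ t, (badPoly (lagPoly N α) N).eval t ≠ 0 →
    RelA N α (lagPoly N α) k t ∧ RelB N α (lagPoly N α) k t ∧ RelC N α (lagPoly N α) k t := by
  induction k with
  | zero =>
    intro t ht
    apply rel_zero
    have := bad_T ht 1 (by omega)
    rwa [hank_one] at this
  | succ k ih =>
    have ih := ih (by omega)
    set p := lagPoly N α with hp
    have nhd : ∀ t, (badPoly p N).eval t ≠ 0 → ∀ᶠ x in nhds t, (badPoly p N).eval x ≠ 0 :=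
      fun t ht => (badPoly p N).continuous.continuousAt.eventually_ne ht
    have key : ∀ t, (badPoly p N).eval t ≠ 0 →
        (t * (t * rr (hank p (k + 1)) t) = -2 * xx (hank p (k + 1)) t * ww p α k t
          - t * ((ss (hank p (k + 1)) t + ((N + 1 - k) - 1)) * (ss (hank p (k + 1)) t + (-k - 1))
            - ss (hank p (k + 1)) t * (ss (hank p (k + 1)) t + (N + α)) - xx (hank p (k + 1)) t))
        ∧ (xx (hank p (k + 1)) t * ww p α k t * (ww p α k t - t)
          + t * ww p α k t * ((ss (hank p (k + 1)) t + ((N + 1 - k) - 1))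
            * (ss (hank p (k + 1)) t + (-k - 1))
            - ss (hank p (k + 1)) t * (ss (hank p (k + 1)) t + (N + α)))
          + t ^ 2 * (ss (hank p (k + 1)) t * (ss (hank p (k + 1)) t + (N + α))) = 0) := by
      intro t ht
      obtain ⟨hA, hB, hC⟩ := ih t ht
      have ht0 := bad_t ht
      have d0 := bad_T ht k (by omega)
      have d1 := bad_T ht (k + 1) (by omega)
      have hX1 : xx (hank p (k + 1)) t = xx (hank p k) t
          + t * (ss (hank p (k + 1)) t - ss (hank p k) t) - ww p α k t + (N + α) + 1
          - (N + 1 - k) - (-k) := by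
        rw [xx_eq, xx_eq]; unfold ww; ring
      have hC' := diff_C _ _ _ _ _ t (N + α) ((N + 1 - k) + (-k)) (ss_hasDerivAt _ t d0)
        (ss_hasDerivAt _ t d1) (ww_hasDerivAt p α k t d0 d1) (by
          filter_upwards [nhd t ht] with x hx
          exact (ih x hx).2.2)
      exact ⟨step_A t _ _ _ _ _ _ _ _ _ _ ht0 hX1 hA hC hC',
        step_B t _ _ _ _ _ _ _ _ ht0 hX1 hB hC⟩
    have keyE : ∀ t, (badPoly p N).eval t ≠ 0 →
        xx (hank p (k + 1)) t * (ww p α (k + 1) t + ww p α k t - t)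
          = - t * ((ss (hank p (k + 1)) t + ((N + 1 - k) - 1)) * (ss (hank p (k + 1)) t + (-k - 1))
            - ss (hank p (k + 1)) t * (ss (hank p (k + 1)) t + (N + α))) := by
      intro t ht
      have hT := toda_pt p α k t (bad_T ht k (by omega)) (bad_T ht (k + 1) (by omega))
        (bad_T ht (k + 2) (by omega))
      linear_combination (key t ht).1 - hT
    intro t ht
    obtain ⟨hA, hB⟩ := key t ht
    have hE := keyE t ht
    have d0 := bad_T ht k (by omega)
    have d1 := bad_T ht (k + 1) (by omega)
    have d2 := bad_T ht (k + 2) (by omega)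
    have hT := toda_pt p α k t d0 d1 d2
    have hX := xx_ne p k t (bad_t ht) d0 d1 d2
    refine ⟨?_, ?_, ?_⟩
    · unfold RelA
      push_cast
      linear_combination hT - hE
    · unfold RelB
      push_cast
      linear_combination (ww p α (k + 1) t - ww p α k t) * hE + hB
    · have hE' := diff_E _ _ _ _ _ _ _ t _ _ _ (xx_hasDerivAt _ t d1) (ss_hasDerivAt _ t d1)
        (ww_hasDerivAt p α k t d0 d1) (ww_hasDerivAt p α (k + 1) t d1 d2) (by
          filter_upwards [nhd t ht] with x hx
          exact keyE x hx)
      have hC := (ih t ht).2.2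
      unfold RelC at hC ⊢
      have := step_C t (ss (hank p (k + 1)) t) _ _ _ _ _ _ _ (N + α) _ hX hT hE hE' (by linear_combination hC)
      push_cast
      linear_combination this

/-- The σ-equation at generic points, in the variable `t = -z`. -/
theorem sigma_generic (N : ℕ) (α : ℝ) (n : ℕ) (hn : n ≤ N) (t : ℝ)
    (ht : (badPoly (lagPoly N α) N).eval t ≠ 0) :
    (t * rr (hank (lagPoly N α) n) t) ^ 2 -
      ((2 * ss (hank (lagPoly N α) n) t ^ 2 + ((N + 1 - n) + (-n) + (N + α) - t)
        * ss (hank (lagPoly N α) n) t + (t * gg (hank (lagPoly N α) n) t - (N + 1 - n) * n)) ^ 2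
      - 4 * ss (hank (lagPoly N α) n) t * (ss (hank (lagPoly N α) n) t + (N + 1 - n))
        * (ss (hank (lagPoly N α) n) t + (-n)) * (ss (hank (lagPoly N α) n) t + (N + α))) = 0 := by
  obtain ⟨hA, hB, -⟩ := rel_all N α n hn t ht
  have ht0 := bad_t ht
  unfold RelA at hA
  unfold RelB at hB
  have hx := xx_eq (hank (lagPoly N α) n) t
  set s := ss (hank (lagPoly N α) n) t
  set r := rr (hank (lagPoly N α) n) t
  set x := xx (hank (lagPoly N α) n) t
  set W := ww (lagPoly N α) α n t
  have hg : t * gg (hank (lagPoly N α) n) t = t * s - x := by linear_combination hx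
  rw [hg]
  apply mul_left_cancel₀ (pow_ne_zero 2 ht0)
  set a1 : ℝ := N + 1 - n
  set a3 : ℝ := N + α
  linear_combination (t * (t * r) + (2 * x * W + t * ((s + a1) * (s + (-n)) - s * (s + a3) - x))) * hA
    + 4 * x * hB

theorem gg_cont (T : Polynomial ℝ) (t : ℝ) (h : T.eval t ≠ 0) : ContinuousAt (gg T) t :=
  (gg_hasDerivAt T t h).continuousAt

theorem rr_cont (T : Polynomial ℝ) (t : ℝ) (h : T.eval t ≠ 0) : ContinuousAt (rr T) t := by
  have h1 := (gg_hasDerivAt T t h).continuousAt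
  have h2 := (ggb_hasDerivAt T t h).continuousAt
  have h3 : ContinuousAt (ggc T) t :=
    (Polynomial.continuous _).continuousAt.div (Polynomial.continuous _).continuousAt h
  unfold rr
  fun_prop

theorem sigma_all (N : ℕ) (α : ℝ) (n : ℕ) (hn : n ≤ N) (t : ℝ)
    (ht : (hank (lagPoly N α) n).eval t ≠ 0) :
    (t * rr (hank (lagPoly N α) n) t) ^ 2 -
      ((2 * ss (hank (lagPoly N α) n) t ^ 2 + ((N + 1 - n) + (-n) + (N + α) - t)
        * ss (hank (lagPoly N α) n) t + (t * gg (hank (lagPoly N α) n) t - (N + 1 - n) * n)) ^ 2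
      - 4 * ss (hank (lagPoly N α) n) t * (ss (hank (lagPoly N α) n) t + (N + 1 - n))
        * (ss (hank (lagPoly N α) n) t + (-n)) * (ss (hank (lagPoly N α) n) t + (N + α))) = 0 := by
  have h1 := gg_cont _ t ht
  have h2 := rr_cont _ t ht
  have h3 := (ss_hasDerivAt _ t ht).continuousAt
  have hev : ∀ᶠ x in nhdsWithin t {t}ᶜ, (badPoly (lagPoly N α) N).eval x ≠ 0 := by
    have hne : badPoly (lagPoly N α) N ≠ 0 := badPoly_ne _ N
      (by intro h; have := lagPoly_coeff_self N α; rw [h] at this; simp at this)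
      (lagPoly_natDegree N α)
    have hf := Polynomial.finite_setOfPred_isRoot hne
    have hf2 := (hf.subset (Set.sdiff_subset (t := {t}))).isClosed.isOpen_compl.mem_nhds
      (x := t) (by simp)
    filter_upwards [nhdsWithin_le_nhds hf2, self_mem_nhdsWithin] with x hx hx2 hx3
    exact hx ⟨hx3, hx2⟩
  have hc : ContinuousAt (fun t => (t * rr (hank (lagPoly N α) n) t) ^ 2 -
      ((2 * ss (hank (lagPoly N α) n) t ^ 2 + ((N + 1 - n) + (-n) + (N + α) - t)
        * ss (hank (lagPoly N α) n) t + (t * gg (hank (lagPoly N α) n) t - (N + 1 - n) * n)) ^ 2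
      - 4 * ss (hank (lagPoly N α) n) t * (ss (hank (lagPoly N α) n) t + (N + 1 - n))
        * (ss (hank (lagPoly N α) n) t + (-n)) * (ss (hank (lagPoly N α) n) t + (N + α)))) t := by
    fun_prop
  refine tendsto_nhds_unique_of_eventuallyEq (l := nhdsWithin t {t}ᶜ) (hc.tendsto.mono_left nhdsWithin_le_nhds)
    (tendsto_const_nhds (x := (0 : ℝ))) ?_
  filter_upwards [hev] with x hx
  exact sigma_generic N α n hn x hx

/-- rational solution of `S_V` from `T̂_{m,n}^{(μ)}(z) = T_{m,n}^{(μ)}(-z)`. -/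
theorem sv_rational_solution_hat (m n : ℕ) (hn : 1 ≤ n) (μ : ℝ) (σh : ℝ → ℝ)
    (hσh : σh = fun z =>
      z * deriv (fun t => genLag (m : ℤ) n μ (-t)) z / genLag (m : ℤ) n μ (-z)
        - ((m : ℝ) + 1) * n) :
    ∀ z : ℝ, z ≠ 0 → genLag (m : ℤ) n μ (-z) ≠ 0 →
      SV (-(m : ℝ) - 1) (n : ℝ) (-(m : ℝ) - n - μ - 1) σh z := by
  intro z _ hz
  have hfun : genLag (m : ℤ) n μ = fun x => (hank (lagPoly (m + n) (μ + 1)) n).eval x :=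
    funext (genLag_eq m n μ)
  rw [hfun] at hσh hz
  have hmain := sigma_all (m + n) (μ + 1) n (by omega) (-z) hz
  set T := hank (lagPoly (m + n) (μ + 1)) n with hT
  have hσ : σh = fun x => (-x) * gg T (-x) - ((m : ℝ) + 1) * n := by
    rw [hσh]
    funext x
    have : deriv (fun t => T.eval (-t)) x = - (Polynomial.derivative T).eval (-x) := by
      have h := (T.hasDerivAt (-x)).comp x (hasDerivAt_neg x)
      have h2 := h.deriv
      rw [mul_neg_one] at h2
      exact h2
    simp only [this]
    unfold gg
    ring
  have h1 : ∀ x, T.eval (-x) ≠ 0 → HasDerivAt σh (- ss T (-x)) x := by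
    intro x hx
    rw [hσ]
    have h := ((y_hasDerivAt T (-x) hx).comp x (hasDerivAt_neg x)).sub_const (((m : ℝ) + 1) * n)
    rw [mul_neg_one] at h
    exact h
  have hd1 : deriv σh z = - ss T (-z) := (h1 z hz).deriv
  have hd2 : iteratedDeriv 2 σh z = rr T (-z) := by
    rw [iteratedDeriv_succ, iteratedDeriv_one]
    have hev : deriv σh =ᶠ[nhds z] fun x => - ss T (-x) := by
      have hcont : ContinuousAt (fun x => T.eval (-x)) z :=
        (T.continuous.comp continuous_neg).continuousAt
      filter_upwards [hcont.eventually_ne hz] with x hx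
      exact (h1 x hx).deriv
    rw [hev.deriv_eq]
    have h := ((ss_hasDerivAt T (-z) hz).comp z (hasDerivAt_neg z)).neg
    rw [mul_neg_one, neg_neg] at h
    exact h.deriv
  unfold SV
  rw [hd1, hd2]
  have hs : σh z = (-z) * gg T (-z) - ((m : ℝ) + 1) * n := by rw [hσ]
  rw [hs]
  push_cast at hmain
  linear_combination hmain
end
end

section
/- Let m ≥ 0, n ≥ 1 be integers and k ∈ ℤ with k ≥ 1−n, and set T̂_{a,b}^{(ν)}(z) = T_{a,b}^{(ν)}(−z). Then, besides σ_{m,n}(z) = z·(d/dz)T_{m,n}^{(k)}(z)/T_{m,n}^{(k)}(z) − (m+1)n, the function σ̂(z) = z · (d/dz)T̂_{m,n+k}^{(−k)}(z) / T̂_{m,n+k}^{(−k)}(z) − (m+1)z − (m+1)n is also a solution of S_V with the same parameters ν = (m+1, −n, m+n+k+1), at every z ≠ 0 where the relevant polynomial is nonzero. -/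
noncomputable section

open Finset

open Polynomial

theorem svx_derivative_det {ι : Type*} [Fintype ι] [DecidableEq ι] (M : Matrix ι ι ℝ[X]) :
    derivative M.det = ∑ j, (M.updateCol j (fun i => derivative (M i j))).det := by
  simp only [Matrix.det_apply, derivative_sum]
  rw [Finset.sum_comm]
  refine Finset.sum_congr rfl fun s _ => ?_
  rw [Units.smul_def, derivative_smul, derivative_prod_finset, Finset.smul_sum]
  refine Finset.sum_congr rfl fun j _ => ?_
  rw [Units.smul_def]
  congr 1
  rw [← Finset.prod_erase_mul _ _ (Finset.mem_univ j)]
  congr 1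
  · refine Finset.prod_congr rfl fun i hi => ?_
    rw [Matrix.updateCol_ne (Finset.ne_of_mem_erase hi)]
  · simp

/-- bordered Hankel matrix. -/
def svxMat {K : Type*} (g : ℕ → K) (n x y : ℕ) : Matrix (Fin n ⊕ Fin 1) (Fin n ⊕ Fin 1) K :=
  Matrix.of fun i j => g (Sum.elim (fun a : Fin n => (a : ℕ)) (fun _ => x) i
    + Sum.elim (fun a : Fin n => (a : ℕ)) (fun _ => y) j)

/-- Hankel determinant. -/
def svxH {K : Type*} [CommRing K] (g : ℕ → K) (n : ℕ) : K :=
  (Matrix.of fun i j : Fin n => g ((i : ℕ) + (j : ℕ))).det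

theorem svxMat_diag {K : Type*} [CommRing K] (g : ℕ → K) (n : ℕ) :
    (svxMat g n n n).det = svxH g (n + 1) := by
  unfold svxH
  rw [← Matrix.det_submatrix_equiv_self (finSumFinEquiv (m := n) (n := 1))]
  congr 1
  ext i j
  rcases i with i | i <;> rcases j with j | j <;> simp [svxMat, Fin.fin_one_eq_zero]

theorem svxMat_symm {K : Type*} [CommRing K] (g : ℕ → K) (n x y : ℕ) :
    (svxMat g n x y).det = (svxMat g n y x).det := by
  rw [← Matrix.det_transpose]
  congr 1
  ext i j
  simp [svxMat, add_comm]

theorem svxMat_derivative (g : ℕ → ℝ[X]) (hg : ∀ k, derivative (g k) = g (k + 1)) (n x : ℕ) :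
    derivative (svxMat g n x n).det = (svxMat g n x (n + 1)).det := by
  rw [svx_derivative_det, Fintype.sum_sum_type]
  simp only [Finset.univ_unique, Finset.sum_singleton]
  rw [Finset.sum_eq_zero, zero_add]
  · congr 1
    ext1 i j
    rcases j with j | j
    · rw [Matrix.updateCol_ne (by simp)]; rfl
    · have : j = default := Subsingleton.elim _ _
      subst this
      rw [Matrix.updateCol_self]
      simp only [svxMat, Matrix.of_apply, Sum.elim_inr, hg]
      rfl
  · intro j _
    by_cases h : (j : ℕ) + 1 < n
    · refine Matrix.det_zero_of_column_eq (i := Sum.inl j) (j := Sum.inl ⟨j + 1, h⟩) ?_ ?_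
      · intro h'
        have := congrArg Fin.val (Sum.inl.inj h')
        simp at this
      · intro i
        rw [Matrix.updateCol_self, Matrix.updateCol_ne]
        · simp [svxMat, hg, add_assoc]
        · intro h'
          have := congrArg Fin.val (Sum.inl.inj h')
          simp at this
    · refine Matrix.det_zero_of_column_eq (i := Sum.inl j) (j := Sum.inr 0) (by simp) ?_
      intro i
      rw [Matrix.updateCol_self, Matrix.updateCol_ne (by simp)]
      have : (j : ℕ) + 1 = n := by omega
      simp [svxMat, hg, add_assoc, this]

theorem svx_schur {K : Type*} [Field K] (g : ℕ → K) (n : ℕ) (h0 : svxH g n ≠ 0) :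
    svxH g (n + 2) * svxH g n = (svxMat g n n n).det * (svxMat g n (n+1) (n+1)).det
      - (svxMat g n n (n+1)).det * (svxMat g n (n+1) n).det := by
  set A : Matrix (Fin n) (Fin n) K := Matrix.of fun i j : Fin n => g ((i : ℕ) + (j : ℕ)) with hA
  have hAd : A.det = svxH g n := rfl
  have : Invertible A := Matrix.invertibleOfIsUnitDet A (by rw [hAd]; exact h0.isUnit)
  let S : ℕ → ℕ → K := fun x y => g (x + y) -
    ∑ j : Fin n, (∑ i : Fin n, g (x + i) * (⅟A) i j) * g (j + y)
  have h1 : ∀ x y, (svxMat g n x y).det = A.det * S x y := by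
    intro x y
    have : svxMat g n x y = Matrix.fromBlocks A (Matrix.of fun i _ => g (i + y))
        (Matrix.of fun _ j => g (x + j)) (Matrix.of fun _ _ => g (x + y)) := by
      ext i j
      rcases i with i | i <;> rcases j with j | j <;> rfl
    rw [this, Matrix.det_fromBlocks₁₁, Matrix.det_fin_one]
    simp [S, Matrix.mul_apply]
  have h2 : svxH g (n + 2) = A.det * (S n n * S (n+1) (n+1) - S n (n+1) * S (n+1) n) := by
    have : svxH g (n + 2) = (Matrix.fromBlocks A (Matrix.of fun i (k : Fin 2) => g (i + (n + k)))
        (Matrix.of fun (k : Fin 2) j => g ((n + k) + j))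
        (Matrix.of fun k l : Fin 2 => g ((n + k) + (n + l)))).det := by
      unfold svxH
      rw [← Matrix.det_submatrix_equiv_self (finSumFinEquiv (m := n) (n := 2))]
      congr 1
      ext i j
      rcases i with i | i <;> rcases j with j | j <;> simp [hA]
    rw [this, Matrix.det_fromBlocks₁₁, Matrix.det_fin_two]
    simp [S, Matrix.mul_apply]
  rw [h2, h1, h1, h1, h1, ← hAd]
  ring

theorem svx_toda (g : ℕ → ℝ[X]) (hg : ∀ k, derivative (g k) = g (k + 1)) (n : ℕ)
    (h0 : svxH g n ≠ 0) :
    svxH g (n + 2) * svxH g n = svxH g (n+1) * derivative (derivative (svxH g (n+1)))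
      - derivative (svxH g (n+1)) ^ 2 := by
  have e1 : derivative (svxH g (n+1)) = (svxMat g n n (n+1)).det := by
    rw [← svxMat_diag, svxMat_derivative g hg]
  have e2 : derivative (derivative (svxH g (n+1))) = (svxMat g n (n+1) (n+1)).det := by
    rw [e1, svxMat_symm, svxMat_derivative g hg]
  let f := algebraMap ℝ[X] (FractionRing ℝ[X])
  have hf : Function.Injective f := IsFractionRing.injective _ _
  have m1 : ∀ k, f (svxH g k) = svxH (fun i => f (g i)) k := by
    intro k
    unfold svxH
    rw [RingHom.map_det]; rfl
  have m2 : ∀ k x y, f (svxMat g k x y).det = (svxMat (fun i => f (g i)) k x y).det := by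
    intro k x y
    rw [RingHom.map_det]; rfl
  have := svx_schur (fun i => f (g i)) n (by rw [← m1]; exact fun h => h0 (hf (by simpa using h)))
  rw [← m1, ← m1, ← m2, ← m2, ← m2, ← m2] at this
  apply hf
  rw [e2, e1, map_mul, this, ← svxMat_diag, svxMat_symm g n (n+1) n, map_sub, map_mul, map_pow]
  ring


/-- The abstract Toda chain argument. -/
theorem svx_chain (U : Set ℝ) (hU : IsOpen U) (hU0 : ∀ x ∈ U, x ≠ 0) (N : ℕ) (μ A : ℝ)
    (h β a : ℕ → ℝ → ℝ)
    (ha : ∀ j x, a (j + 1) x = h (j + 1) x - h j x)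
    (h00 : ∀ x, h 0 x = 0) (β0 : ∀ x, β 0 x = 0)
    (hh : ∀ j ≤ N, ∀ x ∈ U, HasDerivAt (h j) (β j x) x)
    (hβ : ∀ j ≤ N, ∀ x ∈ U, HasDerivAt (β j) (β j x * (a (j + 1) x - a j x)) x)
    (hne : ∀ j ≤ N, 1 ≤ j → ∀ x ∈ U, β j x ≠ 0)
    (base : ∀ x ∈ U, x * β 1 x = x * (h 1 x - h 1 x ^ 2) - (μ + 2) * h 1 x + 1 - A) :
    ∀ n ≤ N, ∀ x ∈ U,
      (x * β n x * (x * (1 - a (n + 1) x - a n x) - (2 * n + μ)) + (2 * n + μ) * h n x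
        + n * (A - n) = 0) ∧
      (2 * n + μ + 1 - x * (1 - a (n + 1) x)) * (h n x + x * β n x) *
          (h n x + x * β n x + A + μ)
        - (2 * n + μ + 1 + x * a (n + 1) x) * (h n x + x * β n x + (A - n)) *
          (h n x + x * β n x - n)
        - x * β n x * (2 * n + μ + 1 + x * a (n + 1) x) *
          (2 * n + μ + 1 - x * (1 - a (n + 1) x)) = 0 := by
  have ha' : ∀ j, j + 1 ≤ N → ∀ x ∈ U, HasDerivAt (a (j + 1)) (β (j + 1) x - β j x) x := by
    intro j hj x hx
    have e : a (j + 1) = fun y => h (j + 1) y - h j y := funext (ha j)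
    rw [e]
    exact (hh _ hj x hx).sub (hh j (by omega) x hx)
  -- the two string equations
  have key : ∀ n ≤ N,
      (∀ x ∈ U, x * β n x * (x * (1 - a (n + 1) x - a n x) - (2 * n + μ)) + (2 * n + μ) * h n x
        + n * (A - n) = 0) ∧
      (n + 1 ≤ N → ∀ x ∈ U, x * (a (n + 1) x - a (n + 1) x ^ 2 - β n x - β (n + 1) x)
        - (2 * n + μ + 2) * a (n + 1) x + 2 * n + 1 - A - 2 * h n x = 0) := by
    intro n
    induction n with
    | zero =>
      intro _
      refine ⟨fun x _ => by simp [h00, β0], fun _ x hx => ?_⟩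
      have := base x hx
      have e : a 1 x = h 1 x := by rw [ha 0 x, h00, sub_zero]
      simp only [zero_add, e, β0, h00]
      push_cast
      linarith
    | succ n ih =>
      intro hn
      obtain ⟨i2, i1⟩ := ih (by omega)
      have i1 := i1 hn
      have E2 : ∀ x ∈ U, x * β (n+1) x * (x * (1 - a (n + 1 + 1) x - a (n+1) x)
          - (2 * (n+1:ℕ) + μ)) + (2 * (n+1:ℕ) + μ) * h (n+1) x
          + (n+1:ℕ) * (A - (n+1:ℕ)) = 0 := by
        intro x hx
        have hx0 := hU0 x hx
        have d1 := ha' n hn x hx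
        have d2 := hβ n (by omega) x hx
        have d3 := hβ (n+1) hn x hx
        have d4 := hh n (by omega) x hx
        have D := ((((hasDerivAt_id x).mul (((d1.sub (d1.pow 2)).sub d2).sub d3)).sub
          (d1.const_mul (2 * (n:ℝ) + μ + 2))).add_const (2 * n + 1 - A)).sub (d4.const_mul 2)
        have Z : HasDerivAt (fun _ : ℝ => (0:ℝ)) 0 x := hasDerivAt_const x 0
        have D0 := D.unique (Z.congr_of_eventuallyEq (by
          filter_upwards [hU.mem_nhds hx] with y hy
          have := i1 y hy
          simp only [Pi.sub_apply, Pi.mul_apply, Pi.pow_apply, id]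
          linarith))
        have j1 := i1 x hx
        have j2 := i2 x hx
        simp only [Pi.sub_apply, Pi.pow_apply, id] at D0
        push_cast at D0 ⊢
        have e := ha n x
        have e' : h (n+1) x = h n x + a (n+1) x := by rw [e]; ring
        rw [e']
        linear_combination x * D0 + j2 - j1
      refine ⟨E2, fun hn2 x hx => ?_⟩
      have hx0 := hU0 x hx
      have d1 := ha' n hn x hx
      have d2 := ha' (n+1) hn2 x hx
      have d3 := hβ (n+1) hn x hx
      have d4 := hh (n+1) hn x hx
      have D := ((((hasDerivAt_id x).mul d3).mul (((hasDerivAt_id x).mul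
        (((hasDerivAt_const x (1:ℝ)).sub d2).sub d1)).sub_const (2 * ((n+1:ℕ):ℝ) + μ))).add
          (d4.const_mul (2 * ((n+1:ℕ):ℝ) + μ))).add_const (((n+1:ℕ):ℝ) * (A - (n+1:ℕ)))
      have Z : HasDerivAt (fun _ : ℝ => (0:ℝ)) 0 x := hasDerivAt_const x 0
      have D0 := D.unique (Z.congr_of_eventuallyEq (by
        filter_upwards [hU.mem_nhds hx] with y hy
        have := E2 y hy
        simp only [Pi.sub_apply, Pi.mul_apply, Pi.add_apply, id]
        linarith))
      have j1 := i1 x hx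
      simp only [Pi.sub_apply, Pi.mul_apply, id] at D0
      have hb := hne (n+1) hn (by omega) x hx
      apply mul_left_cancel₀ (mul_ne_zero hx0 hb)
      have e := ha n x
      have e' : h (n+1) x = h n x + a (n+1) x := by rw [e]; ring
      rw [e']
      push_cast at D0 ⊢
      linear_combination D0 + x * β (n+1) x * j1
  intro n hn x hx
  refine ⟨(key n hn).1 x hx, ?_⟩
  induction n with
  | zero => simp [h00, β0]
  | succ n ih =>
    have F := ih (by omega)
    have j1 := (key n (by omega)).2 hn x hx
    have j2 := (key (n+1) hn).1 x hx
    have hy : x * β (n+1) x = x * (a (n + 1) x - a (n + 1) x ^ 2) - x * β n x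
        - (2 * n + μ + 2) * a (n + 1) x + 2 * n + 1 - A - 2 * h n x := by linarith
    have e := ha n x
    have e' : h (n+1) x = h n x + a (n+1) x := by rw [e]; ring
    have F' : (2 * n + μ + 1 - x * (1 - a (n + 1) x)) * (h (n+1) x + x * β (n+1) x) *
          (h (n+1) x + x * β (n+1) x + A + μ)
        - (2 * n + μ + 1 + x * a (n + 1) x) * (h (n+1) x + x * β (n+1) x + (A - n - 1)) *
          (h (n+1) x + x * β (n+1) x - n - 1)
        - x * β (n+1) x * (2 * n + μ + 1 + x * a (n + 1) x) *
          (2 * n + μ + 1 - x * (1 - a (n + 1) x)) = 0 := by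
      rw [hy, e']
      linear_combination F
    push_cast at j2 ⊢
    linear_combination F' + j2 * (2 + x * (a (n+1+1) x - a (n+1) x))

theorem svx_degree_step (T S R : ℝ[X]) (d e : ℕ) (hT : T ≠ 0) (hS : S ≠ 0) (hd : T.natDegree = d + 1)
    (hSd : S.natDegree = e)
    (h : R * S = T * derivative (derivative T) - derivative T ^ 2) :
    R ≠ 0 ∧ R.natDegree + e = 2 * d := by
  have n1 : (derivative T).natDegree ≤ d := by
    have := natDegree_derivative_le T; omega
  have n2 : (derivative (derivative T)).natDegree ≤ d - 1 := by
    have := natDegree_derivative_le (derivative T); omega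
  have hl : T.coeff (d + 1) ≠ 0 := by
    rw [← hd]; exact leadingCoeff_ne_zero.mpr hT
  have c1 : (derivative T ^ 2).coeff (2 * d) = (T.coeff (d+1) * (d + 1)) ^ 2 := by
    have := coeff_pow_of_natDegree_le (m := 2) n1
    rw [this, coeff_derivative]
  have c2 : (T * derivative (derivative T)).coeff (2 * d)
      = T.coeff (d+1) * (T.coeff (d+1) * (d + 1) * d) := by
    rcases d with _ | d
    · have : derivative (derivative T) = 0 := by
        rw [eq_C_of_natDegree_le_zero n1, derivative_C]
      simp [this]
    · rw [Nat.add_sub_cancel] at n2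
      rw [show 2 * (d + 1) = (d + 1 + 1) + d by ring]
      rw [coeff_mul_add_eq_of_natDegree_le hd.le n2]
      simp [coeff_derivative]
  have nn : (R * S).natDegree ≤ 2 * d := by
    rw [h]
    refine (natDegree_sub_le _ _).trans (max_le ?_ ?_)
    · rcases d with _ | d
      · have : derivative (derivative T) = 0 := by
          rw [eq_C_of_natDegree_le_zero n1, derivative_C]
        simp [this]
      · refine natDegree_mul_le.trans ?_
        rw [Nat.add_sub_cancel] at n2
        omega
    · refine natDegree_pow_le.trans ?_
      omega
  have cc : (R * S).coeff (2 * d) ≠ 0 := by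
    rw [h, coeff_sub, c1, c2]
    have : T.coeff (d+1) * (T.coeff (d+1) * ((d:ℝ) + 1) * d) - (T.coeff (d+1) * (d + 1)) ^ 2
      = - (T.coeff (d+1) ^ 2 * (d + 1)) := by ring
    rw [this, neg_ne_zero]
    positivity
  have hR : R ≠ 0 := by
    rintro rfl
    simp at cc
  refine ⟨hR, ?_⟩
  rw [← hSd, ← natDegree_mul hR hS]
  exact le_antisymm nn (le_natDegree_of_ne_zero cc)


/-- Laguerre polynomial as a polynomial. -/
def svxP (N : ℕ) (μ : ℝ) : ℝ[X] :=
  ∑ k ∈ Finset.range (N + 1),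
    Polynomial.monomial k ((-1 : ℝ) ^ k * genBinom ((N : ℝ) + (μ + 1)) (N - k) / (Nat.factorial k))

theorem svxP_coeff (N : ℕ) (μ : ℝ) (k : ℕ) : (svxP N μ).coeff k =
    if k ≤ N then (-1 : ℝ) ^ k * genBinom ((N : ℝ) + (μ + 1)) (N - k) / (Nat.factorial k) else 0 := by
  unfold svxP
  simp [Polynomial.finsetSum_coeff, Polynomial.coeff_monomial]

theorem svxP_natDegree (N : ℕ) (μ : ℝ) : svxP N μ ≠ 0 ∧ (svxP N μ).natDegree = N := by
  have h : (svxP N μ).coeff N ≠ 0 := by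
    rw [svxP_coeff]
    simp [genBinom, Nat.factorial_ne_zero]
  refine ⟨fun h0 => h (by simp [h0]), le_antisymm ?_ (le_natDegree_of_ne_zero h)⟩
  rw [natDegree_le_iff_coeff_eq_zero]
  intro k hk
  rw [svxP_coeff, if_neg (by omega)]

theorem svxP_ode (N : ℕ) (μ : ℝ) :
    X * derivative (derivative (svxP N μ)) + (C (μ + 2) - X) * derivative (svxP N μ)
      + C (N : ℝ) * svxP N μ = 0 := by
  have hrec : ∀ k : ℕ, ((k:ℝ) + 1) * (k + μ + 2) * (svxP N μ).coeff (k + 1)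
      = - (N - k) * (svxP N μ).coeff k := by
    intro k
    rw [svxP_coeff, svxP_coeff]
    rcases lt_trichotomy k N with h | h | h
    · obtain ⟨r, rfl⟩ : ∃ r, N = k + 1 + r := ⟨N - (k + 1), by omega⟩
      rw [if_pos (by omega), if_pos (by omega)]
      rw [show k + 1 + r - (k + 1) = r by omega, show k + 1 + r - k = r + 1 by omega]
      unfold genBinom
      rw [Finset.prod_range_succ, Nat.factorial_succ, Nat.factorial_succ]
      have h1 : ((Nat.factorial k : ℕ) : ℝ) ≠ 0 := by exact_mod_cast Nat.factorial_ne_zero k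
      have h2 : ((Nat.factorial r : ℕ) : ℝ) ≠ 0 := by exact_mod_cast Nat.factorial_ne_zero r
      have h3 : (k:ℝ) + 1 ≠ 0 := by positivity
      have h4 : (r:ℝ) + 1 ≠ 0 := by positivity
      push_cast
      generalize (∏ i ∈ Finset.range r, ((k:ℝ) + 1 + r + (μ + 1) - i)) = W
      field_simp
      ring
    · subst h
      simp
    · rw [if_neg (by omega), if_neg (by omega)]
      simp
  ext k
  rcases k with _ | k
  · have := hrec 0
    simp [sub_mul, coeff_derivative] at this ⊢
    linarith
  · have := hrec (k + 1)
    simp [sub_mul, coeff_X_mul, coeff_derivative, -map_add] at this ⊢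
    linear_combination this

theorem svx_lagL (N : ℕ) (μ : ℝ) : lagL ((N : ℕ) : ℤ) (μ + 1) = fun z => (svxP N μ).eval z := by
  funext z
  simp only [lagL, svxP, eval_finsetSum, eval_monomial]
  rw [if_neg (by omega)]
  simp only [Int.toNat_natCast]
  refine Finset.sum_congr rfl fun k _ => ?_
  push_cast
  ring

theorem svx_iter (p : ℝ[X]) (k : ℕ) :
    iteratedDeriv k (fun z => p.eval z) = fun z => (derivative^[k] p).eval z := by
  induction k with
  | zero => simp
  | succ k ih =>
    rw [iteratedDeriv_succ, ih, Function.iterate_succ_apply']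
    funext z
    exact Polynomial.deriv _



/-- tau polynomials -/
def svxT (N : ℕ) (μ : ℝ) (j : ℕ) : ℝ[X] := svxH (fun k => derivative^[k] (svxP N μ)) j

theorem svxT_toda (N : ℕ) (μ : ℝ) (j : ℕ) (h0 : svxT N μ j ≠ 0) :
    svxT N μ (j + 2) * svxT N μ j = svxT N μ (j+1) * derivative (derivative (svxT N μ (j+1)))
      - derivative (svxT N μ (j+1)) ^ 2 := by
  have hg : ∀ k, derivative ((fun k => derivative^[k] (svxP N μ)) k)
      = (fun k => derivative^[k] (svxP N μ)) (k + 1) := by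
    intro k
    simp only []
    rw [Function.iterate_succ_apply']
  unfold svxT at h0 ⊢
  exact svx_toda (fun k => derivative^[k] (svxP N μ)) hg j h0

theorem svxT_zero (N : ℕ) (μ : ℝ) : svxT N μ 0 = 1 := by
  simp [svxT, svxH]

theorem svxT_one (N : ℕ) (μ : ℝ) : svxT N μ 1 = svxP N μ := by
  simp [svxT, svxH]

theorem svxT_degree (N : ℕ) (μ : ℝ) (j : ℕ) (hj : j ≤ N) :
    svxT N μ j ≠ 0 ∧ (svxT N μ j).natDegree = j * (N + 1 - j) ∧
    svxT N μ (j + 1) ≠ 0 ∧ (svxT N μ (j + 1)).natDegree = (j + 1) * (N - j) := by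
  induction j with
  | zero =>
    have := svxP_natDegree N μ
    rw [svxT_zero, svxT_one]
    simp [this.1, this.2]
  | succ j ih =>
    obtain ⟨h1, h2, h3, h4⟩ := ih (by omega)
    obtain ⟨r, rfl⟩ : ∃ r, N = j + 1 + r := ⟨N - (j + 1), by omega⟩
    rw [show j + 1 + r + 1 - j = r + 2 by omega] at h2
    rw [show j + 1 + r - j = r + 1 by omega] at h4
    have := svx_degree_step (svxT (j+1+r) μ (j+1)) (svxT (j+1+r) μ j) (svxT (j+1+r) μ (j+2))
      (j * r + j + r) (j * (r + 2)) h3 h1 (by rw [h4]; ring) h2 (svxT_toda _ μ j h1)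
    refine ⟨h3, ?_, this.1, ?_⟩
    · rw [h4]; congr 1; omega
    · have h5 := this.2
      rw [show j + 1 + r - (j + 1) = r by omega]
      have : (svxT (j + 1 + r) μ (j + 1 + 1)).natDegree + j * (r + 2)
        = (j + 1 + 1) * r + j * (r + 2) := by
        rw [h5]; ring
      omega

theorem svxT_ne (N : ℕ) (μ : ℝ) (j : ℕ) (hj : j ≤ N + 1) : svxT N μ j ≠ 0 := by
  rcases j with _ | j
  · rw [svxT_zero]; exact one_ne_zero
  · exact (svxT_degree N μ j (by omega)).2.2.1

theorem svx_genLag (m n : ℕ) (μ : ℝ) :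
    genLag (m : ℤ) n μ = fun z => (svxT (m + n) μ n).eval z := by
  funext z
  unfold genLag svxT svxH
  rw [show ((m : ℤ) + (n : ℤ)) = ((m + n : ℕ) : ℤ) by push_cast; rfl, svx_lagL,
    ← Polynomial.coe_evalRingHom, RingHom.map_det]
  congr 1
  ext i j
  simp [svx_iter]

/-- logarithmic derivative of tau -/
def svxh (N : ℕ) (μ : ℝ) (j : ℕ) (x : ℝ) : ℝ :=
  (derivative (svxT N μ j)).eval x / (svxT N μ j).eval x

/-- Toda variable -/
def svxb (N : ℕ) (μ : ℝ) : ℕ → ℝ → ℝ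
  | 0, _ => 0
  | j + 1, x => (svxT N μ (j + 2)).eval x * (svxT N μ j).eval x / (svxT N μ (j + 1)).eval x ^ 2

/-- Toda variable -/
def svxa (N : ℕ) (μ : ℝ) : ℕ → ℝ → ℝ
  | 0, _ => 0
  | j + 1, x => svxh N μ (j + 1) x - svxh N μ j x

/-- second log derivative -/
def svxB (T : ℝ[X]) (x : ℝ) : ℝ :=
  (T.eval x * (derivative (derivative T)).eval x - (derivative T).eval x ^ 2) / T.eval x ^ 2

/-- third log derivative -/
def svxG (T : ℝ[X]) (x : ℝ) : ℝ :=
  (T.eval x * (derivative (derivative (derivative T))).eval x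
    - (derivative T).eval x * (derivative (derivative T)).eval x) / T.eval x ^ 2
  - 2 * (T.eval x * (derivative (derivative T)).eval x - (derivative T).eval x ^ 2)
    * (derivative T).eval x / T.eval x ^ 3

theorem svx_hasDerivAt_h (T : ℝ[X]) (x : ℝ) (h : T.eval x ≠ 0) :
    HasDerivAt (fun y => (derivative T).eval y / T.eval y) (svxB T x) x := by
  have := ((derivative T).hasDerivAt x).div (T.hasDerivAt x) h
  refine this.congr_deriv ?_
  unfold svxB
  ring

theorem svx_hasDerivAt_B (T : ℝ[X]) (x : ℝ) (h : T.eval x ≠ 0) :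
    HasDerivAt (svxB T) (svxG T x) x := by
  have := ((((T.hasDerivAt x).mul ((derivative (derivative T)).hasDerivAt x)).sub
    (((derivative T).hasDerivAt x).pow 2))).div ((T.hasDerivAt x).pow 2) (pow_ne_zero 2 h)
  refine this.congr_deriv ?_
  unfold svxG
  simp only [Pi.pow_apply, Pi.mul_apply, Pi.sub_apply]
  field_simp
  ring

theorem svx_on_U (N : ℕ) (μ : ℝ) (U : Set ℝ) (hU : IsOpen U)
    (hU' : ∀ x ∈ U, x ≠ 0 ∧ ∀ j ≤ N + 1, (svxT N μ j).eval x ≠ 0) (n : ℕ) (hn : n ≤ N) (x : ℝ)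
    (hx : x ∈ U) :
    ∃ α α' : ℝ, svxG (svxT N μ n) x = svxB (svxT N μ n) x * (α - α') ∧
     (x * svxB (svxT N μ n) x * (x * (1 - α - α') - (2 * n + μ)) + (2 * n + μ) * svxh N μ n x
        + n * (((N:ℝ) + 1) - n) = 0) ∧
      (2 * n + μ + 1 - x * (1 - α)) * (svxh N μ n x + x * svxB (svxT N μ n) x) *
          (svxh N μ n x + x * svxB (svxT N μ n) x + (N + 1) + μ)
        - (2 * n + μ + 1 + x * α) * (svxh N μ n x + x * svxB (svxT N μ n) x + ((N + 1) - n)) *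
          (svxh N μ n x + x * svxB (svxT N μ n) x - n)
        - x * svxB (svxT N μ n) x * (2 * n + μ + 1 + x * α) *
          (2 * n + μ + 1 - x * (1 - α)) = 0 := by
  have bB : ∀ j ≤ N + 1, ∀ y ∈ U, svxB (svxT N μ j) y = svxb N μ j y := by
    intro j hj y hy
    rcases j with _ | j
    · rw [svxT_zero]; simp [svxB, svxb]
    · have := congrArg (fun q => Polynomial.eval y q) (svxT_toda N μ j (svxT_ne N μ j (by omega)))
      simp only [eval_mul, eval_sub, eval_pow] at this
      unfold svxB
      rw [← this]; rfl
  have hh : ∀ j ≤ N, ∀ y ∈ U, HasDerivAt (svxh N μ j) (svxb N μ j y) y := by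
    intro j hj y hy
    rw [← bB j (by omega) y hy]
    exact svx_hasDerivAt_h _ _ ((hU' y hy).2 j (by omega))
  have hβ : ∀ j ≤ N, ∀ y ∈ U, HasDerivAt (svxb N μ j)
      (svxb N μ j y * (svxa N μ (j + 1) y - svxa N μ j y)) y := by
    intro j hj y hy
    rcases j with _ | j
    · have : svxb N μ 0 = fun _ => 0 := rfl
      rw [this]; simpa using hasDerivAt_const y (0:ℝ)
    · have n0 := (hU' y hy).2 j (by omega)
      have n1 := (hU' y hy).2 (j + 1) (by omega)
      have n2 := (hU' y hy).2 (j + 2) (by omega)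
      have := (((svxT N μ (j + 2)).hasDerivAt y).mul ((svxT N μ j).hasDerivAt y)).div
        (((svxT N μ (j + 1)).hasDerivAt y).pow 2) (pow_ne_zero 2 n1)
      refine this.congr_deriv ?_
      simp only [svxb, svxa, svxh, Pi.pow_apply, Pi.mul_apply]
      field_simp
      ring
  have main := svx_chain U hU (fun y hy => (hU' y hy).1) N μ (N + 1) (svxh N μ) (svxb N μ)
    (svxa N μ) (fun j y => rfl) (fun y => by simp [svxh, svxT_zero]) (fun y => rfl) hh hβ
    (by
      intro j hj h1 y hy
      obtain ⟨i, rfl⟩ : ∃ i, j = i + 1 := ⟨j - 1, by omega⟩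
      have n0 := (hU' y hy).2 i (by omega)
      have n1 := (hU' y hy).2 (i + 1) (by omega)
      have n2 := (hU' y hy).2 (i + 2) (by omega)
      simp only [svxb]
      positivity)
    (by
      intro y hy
      rw [← bB 1 (by omega) y hy]
      have n1 := (hU' y hy).2 1 (by omega)
      have := congrArg (fun q => Polynomial.eval y q) (svxP_ode N μ)
      rw [← svxT_one] at this
      simp only [eval_mul, eval_sub, eval_add, eval_X, eval_C, eval_zero] at this
      simp only [svxB, svxh]
      field_simp
      linear_combination (eval y (svxT N μ 1)) * this) n hn x hx
  refine ⟨svxa N μ (n + 1) x, svxa N μ n x, ?_, ?_, ?_⟩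
  · have d := svx_hasDerivAt_B (svxT N μ n) x ((hU' x hx).2 n (by omega))
    rw [bB n (by omega) x hx]
    refine d.unique ((hβ n hn x hx).congr_of_eventuallyEq ?_)
    filter_upwards [hU.mem_nhds hx] with y hy
    exact bB n (by omega) y hy
  · rw [bB n (by omega) x hx]; exact main.1
  · rw [bB n (by omega) x hx]; exact main.2

theorem svx_identity (m n : ℕ) (μ : ℝ) (z : ℝ) (hz : (svxT (m + n) μ n).eval z ≠ 0) :
    (z * (2 * svxB (svxT (m+n) μ n) z + z * svxG (svxT (m+n) μ n) z)) ^ 2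
      - ((2 * (svxh (m+n) μ n z + z * svxB (svxT (m+n) μ n) z) ^ 2
          + (((m : ℝ) + 1) + (-(n : ℝ)) + ((m : ℝ) + n + μ + 1) - z)
            * (svxh (m+n) μ n z + z * svxB (svxT (m+n) μ n) z)
          + (z * svxh (m+n) μ n z - ((m:ℝ) + 1) * n)) ^ 2
        - 4 * (svxh (m+n) μ n z + z * svxB (svxT (m+n) μ n) z)
          * (svxh (m+n) μ n z + z * svxB (svxT (m+n) μ n) z + ((m : ℝ) + 1))
          * (svxh (m+n) μ n z + z * svxB (svxT (m+n) μ n) z + (-(n : ℝ)))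
          * (svxh (m+n) μ n z + z * svxB (svxT (m+n) μ n) z + ((m : ℝ) + n + μ + 1))) = 0 := by
  set q : ℝ[X] := X * ∏ j ∈ Finset.range (m + n + 2), svxT (m+n) μ j with hq
  have hq0 : q ≠ 0 := by
    refine mul_ne_zero X_ne_zero (Finset.prod_ne_zero_iff.mpr fun j hj => ?_)
    exact svxT_ne _ _ _ (by have := Finset.mem_range.mp hj; omega)
  set U : Set ℝ := {x | q.eval x ≠ 0} with hUd
  have hU : IsOpen U := isOpen_ne_fun q.continuous continuous_const
  have hU' : ∀ x ∈ U, x ≠ 0 ∧ ∀ j ≤ (m + n) + 1, (svxT (m+n) μ j).eval x ≠ 0 := by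
    intro x hx
    rw [hUd, Set.mem_setOf_eq, hq, eval_mul, eval_X, eval_prod] at hx
    refine ⟨left_ne_zero_of_mul hx, fun j hj => ?_⟩
    exact Finset.prod_ne_zero_iff.mp (right_ne_zero_of_mul hx) j (Finset.mem_range.mpr (by omega))
  have hev : ∀ᶠ x in nhdsWithin z {z}ᶜ, x ∈ U := by
    have hfin : {x | q.IsRoot x}.Finite := Polynomial.finite_setOf_isRoot hq0
    have h1 : ({x | q.IsRoot x} \ {z})ᶜ ∈ nhds z :=
      (hfin.subset Set.diff_subset).isClosed.isOpen_compl.mem_nhds (by simp)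
    filter_upwards [mem_nhdsWithin_of_mem_nhds h1, self_mem_nhdsWithin] with x hx hx2
    intro h
    exact hx ⟨h, hx2⟩
  have c1 : ContinuousAt (svxh (m+n) μ n) z := (svx_hasDerivAt_h _ z hz).continuousAt
  have c2 : ContinuousAt (svxB (svxT (m+n) μ n)) z := (svx_hasDerivAt_B _ z hz).continuousAt
  have c3 : ContinuousAt (svxG (svxT (m+n) μ n)) z := by
    unfold svxG
    refine ContinuousAt.sub (ContinuousAt.div (by fun_prop) (by fun_prop) (pow_ne_zero 2 hz))
      (ContinuousAt.div (by fun_prop) (by fun_prop) (pow_ne_zero 3 hz))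
  set E : ℝ → ℝ := fun z => (z * (2 * svxB (svxT (m+n) μ n) z + z * svxG (svxT (m+n) μ n) z)) ^ 2
      - ((2 * (svxh (m+n) μ n z + z * svxB (svxT (m+n) μ n) z) ^ 2
          + (((m : ℝ) + 1) + (-(n : ℝ)) + ((m : ℝ) + n + μ + 1) - z)
            * (svxh (m+n) μ n z + z * svxB (svxT (m+n) μ n) z)
          + (z * svxh (m+n) μ n z - ((m:ℝ) + 1) * n)) ^ 2
        - 4 * (svxh (m+n) μ n z + z * svxB (svxT (m+n) μ n) z)
          * (svxh (m+n) μ n z + z * svxB (svxT (m+n) μ n) z + ((m : ℝ) + 1))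
          * (svxh (m+n) μ n z + z * svxB (svxT (m+n) μ n) z + (-(n : ℝ)))
          * (svxh (m+n) μ n z + z * svxB (svxT (m+n) μ n) z + ((m : ℝ) + n + μ + 1))) with hE
  have cE : ContinuousAt E z := by
    rw [hE]; fun_prop
  have t1 : Filter.Tendsto E (nhdsWithin z {z}ᶜ) (nhds (E z)) :=
    cE.tendsto.mono_left nhdsWithin_le_nhds
  have t2 : Filter.Tendsto E (nhdsWithin z {z}ᶜ) (nhds 0) := by
    refine tendsto_const_nhds.congr' ?_
    filter_upwards [hev] with x hx
    obtain ⟨α, α', e1, e2, e3⟩ := svx_on_U (m+n) μ U hU hU' n (by omega) x hx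
    rw [hE]
    simp only []
    rw [e1]
    generalize svxB (svxT (m+n) μ n) x = b at *
    generalize svxh (m+n) μ n x = h at *
    push_cast at e2 e3
    symm
    linear_combination (-4 * x * b) * e3 + (2 * (2 * x * b + x * x * b * (α - α')) -
      (x * b * (x * (1 - α - α') - (2 * n + μ)) + (2 * n + μ) * h
        + n * (((m:ℝ) + n + 1) - n))) * e2
  exact tendsto_nhds_unique t1 t2

/-- derivative package for the sigma function -/
theorem svx_main (m n : ℕ) (μ : ℝ) (z : ℝ) (hz : genLag (m : ℤ) n μ z ≠ 0) :
    ∃ s1 : ℝ → ℝ, ∃ s2 : ℝ,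
      (∀ᶠ x in nhds z, HasDerivAt (fun z => z * deriv (genLag (m : ℤ) n μ) z / genLag (m : ℤ) n μ z
        - ((m : ℝ) + 1) * n) (s1 x) x) ∧ HasDerivAt s1 s2 z ∧
      (z * s2) ^ 2 = (2 * (s1 z) ^ 2 + (((m : ℝ) + 1) + (-(n : ℝ)) + ((m : ℝ) + n + μ + 1) - z) * s1 z
        + (z * deriv (genLag (m : ℤ) n μ) z / genLag (m : ℤ) n μ z - ((m : ℝ) + 1) * n)) ^ 2
      - 4 * s1 z * (s1 z + ((m : ℝ) + 1)) * (s1 z + (-(n : ℝ))) * (s1 z + ((m : ℝ) + n + μ + 1)) := by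
  have e : ∀ z, z * deriv (genLag (m : ℤ) n μ) z / genLag (m : ℤ) n μ z
      = z * svxh (m+n) μ n z := by
    intro z
    rw [svx_genLag, Polynomial.deriv, svxh]
    ring
  simp only [e]
  have hz' : (svxT (m + n) μ n).eval z ≠ 0 := by
    rw [svx_genLag] at hz; exact hz
  refine ⟨fun x => svxh (m+n) μ n x + x * svxB (svxT (m+n) μ n) x,
    2 * svxB (svxT (m+n) μ n) z + z * svxG (svxT (m+n) μ n) z, ?_, ?_, ?_⟩
  · have : ∀ᶠ x in nhds z, (svxT (m + n) μ n).eval x ≠ 0 :=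
      (svxT (m + n) μ n).continuous.continuousAt.eventually_ne hz'
    filter_upwards [this] with x hx
    have := ((hasDerivAt_id x).mul (svx_hasDerivAt_h _ x hx)).sub_const (((m : ℝ) + 1) * n)
    refine this.congr_deriv ?_
    simp [svxh]
  · have := (svx_hasDerivAt_h _ z hz').add ((hasDerivAt_id z).mul (svx_hasDerivAt_B _ z hz'))
    refine this.congr_deriv ?_
    simp
    ring
  · linarith [svx_identity m n μ z hz']

theorem svx_SV (ν₁ ν₂ ν₃ : ℝ) (σ s1 : ℝ → ℝ) (s2 z : ℝ)
    (h1 : ∀ᶠ x in nhds z, HasDerivAt σ (s1 x) x) (h2 : HasDerivAt s1 s2 z)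
    (h : (z * s2) ^ 2 = (2 * (s1 z) ^ 2 + (ν₁ + ν₂ + ν₃ - z) * s1 z + σ z) ^ 2
      - 4 * s1 z * (s1 z + ν₁) * (s1 z + ν₂) * (s1 z + ν₃)) : SV ν₁ ν₂ ν₃ σ z := by
  have d1 : deriv σ z = s1 z := h1.self_of_nhds.deriv
  have d2 : iteratedDeriv 2 σ z = s2 := by
    rw [iteratedDeriv_succ, iteratedDeriv_one]
    have : deriv σ =ᶠ[nhds z] s1 := h1.mono fun x hx => hx.deriv
    rw [this.deriv_eq, h2.deriv]
  unfold SV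
  rw [d1, d2, h]

/-- non-uniqueness of rational solutions of `S_V` for integer `μ = k ≥ 1-n`. -/
theorem sv_nonuniqueness (m n : ℕ) (hn : 1 ≤ n) (k : ℤ) (hk : 1 - (n : ℤ) ≤ k)
    (σ σh : ℝ → ℝ)
    (hσ : σ = fun z =>
      z * deriv (genLag (m : ℤ) n (k : ℝ)) z / genLag (m : ℤ) n (k : ℝ) z
        - ((m : ℝ) + 1) * n)
    (hσh : σh = fun z =>
      z * deriv (fun t => genLag (m : ℤ) ((n : ℤ) + k).toNat (-(k : ℝ)) (-t)) z /
          genLag (m : ℤ) ((n : ℤ) + k).toNat (-(k : ℝ)) (-z)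
        - ((m : ℝ) + 1) * z - ((m : ℝ) + 1) * n) :
    (∀ z : ℝ, z ≠ 0 → genLag (m : ℤ) n (k : ℝ) z ≠ 0 →
        SV ((m : ℝ) + 1) (-(n : ℝ)) ((m : ℝ) + n + k + 1) σ z)
      ∧ ∀ z : ℝ, z ≠ 0 → genLag (m : ℤ) ((n : ℤ) + k).toNat (-(k : ℝ)) (-z) ≠ 0 →
        SV ((m : ℝ) + 1) (-(n : ℝ)) ((m : ℝ) + n + k + 1) σh z := by
  constructor
  · intro z _ hT
    obtain ⟨s1, s2, h1, h2, h3⟩ := svx_main m n k z hT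
    subst hσ
    exact svx_SV _ _ _ _ s1 s2 z h1 h2 h3
  · intro z _ hT
    obtain ⟨r, hr⟩ : ∃ r : ℕ, ((n : ℤ) + k).toNat = r := ⟨_, rfl⟩
    have hrk : (r : ℝ) = n + k := by
      have : (r : ℤ) = n + k := by omega
      exact_mod_cast this
    rw [hr] at hT hσh
    obtain ⟨s1, s2, h1, h2, h3⟩ := svx_main m r (-(k:ℝ)) (-z) hT
    set S : ℝ → ℝ := fun z => z * deriv (genLag (m : ℤ) r (-(k:ℝ))) z / genLag (m : ℤ) r (-(k:ℝ)) z
        - ((m : ℝ) + 1) * r with hS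
    have e : σh = fun z => S (-z) - ((m : ℝ) + 1) * z + ((m : ℝ) + 1) * k := by
      rw [hσh, hS]
      funext z
      rw [deriv_comp_neg, hrk]
      ring
    have hneg : ∀ x : ℝ, HasDerivAt (fun y : ℝ => -y) (-1) x := fun x => hasDerivAt_neg x
    refine svx_SV _ _ _ σh (fun x => - s1 (-x) - ((m : ℝ) + 1)) s2 z ?_ ?_ ?_
    · have h1' : ∀ᶠ x in nhds z, HasDerivAt S (s1 (-x)) (-x) :=
        (continuous_neg.tendsto z).eventually h1
      filter_upwards [h1'] with x hx
      rw [e]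
      have := (((hx.comp x (hneg x)).sub ((hasDerivAt_id x).const_mul ((m : ℝ) + 1)))).add_const
        (((m : ℝ) + 1) * k)
      refine this.congr_deriv ?_
      ring
    · have := ((h2.comp z (hneg z)).neg).sub_const ((m : ℝ) + 1)
      refine this.congr_deriv ?_
      ring
    · have e2 : σh z = S (-z) - ((m : ℝ) + 1) * z + ((m : ℝ) + 1) * k := by rw [e]
      rw [e2]
      have h3' : (-z * s2) ^ 2 = (2 * (s1 (-z)) ^ 2
          + (((m : ℝ) + 1) + (-(r : ℝ)) + ((m : ℝ) + r + -(k:ℝ) + 1) - -z) * s1 (-z) + S (-z)) ^ 2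
          - 4 * s1 (-z) * (s1 (-z) + ((m : ℝ) + 1)) * (s1 (-z) + (-(r : ℝ)))
          * (s1 (-z) + ((m : ℝ) + r + -(k:ℝ) + 1)) := h3
      rw [hrk] at h3'
      linear_combination h3'
end
end

section
/- Let m ≥ 0, n ≥ 1 be integers and let c_{m,n} = (−1)^{n(2m+1+n)/2} ∏_{j=1}^{n} (j−1)!/(m+j)!. Then the generalised Laguerre polynomials factorise at negative integer parameter values as follows: (i) for j = 1, …, m: T_{m,n}^{(−n−j)}(z) = (c_{m,n}/c_{m−j,n}) · z^{nj} · T_{m−j,n}^{(j−n)}(z), with T_{m−j,n}^{(j−n)}(0) ≠ 0; (ii) T_{m,n}^{(−m−n−1)}(z) = c_{m,n} · z^{n(m+1)}; (iii) for j = 2, …, n: T_{m,n}^{(−m−n−j)}(z) = (c_{m,n}/c_{m,j−1}) · z^{(m+1)(n+1−j)} · T_{m,j−1}^{(−m−n−j)}(z), with T_{m,j−1}^{(−m−n−j)}(0) ≠ 0. -/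
noncomputable section

open Finset

open PowerSeries in
/-- The exponential series `e^{wt}`. -/
def EE (w : ℝ) : PowerSeries ℝ := PowerSeries.rescale w (PowerSeries.exp ℝ)

/-- Toeplitz determinant attached to a power series. -/
def TT (n M : ℕ) (H : PowerSeries ℝ) : ℝ :=
  Matrix.det (Matrix.of fun j k : Fin n =>
    PowerSeries.coeff (M + (k : ℕ)) (PowerSeries.X ^ (j : ℕ) * H))

lemma coeff_EE (w : ℝ) (k : ℕ) : PowerSeries.coeff k (EE w) = w ^ k / (Nat.factorial k) := by
  simp [EE, PowerSeries.coeff_rescale, PowerSeries.coeff_exp, div_eq_mul_inv]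

lemma EE_mul_neg (w : ℝ) : EE w * EE (-w) = 1 := by
  rw [EE, EE, PowerSeries.exp_mul_exp_eq_exp_add]
  simp

lemma EE_zero : EE 0 = 1 := by
  simp [EE]

lemma constCoeff_EE (w : ℝ) : PowerSeries.constantCoeff (EE w) = 1 := by
  rw [← PowerSeries.coeff_zero_eq_constantCoeff_apply, coeff_EE]
  simp

lemma genBinom_eq (x : ℝ) (k : ℕ) :
    genBinom x k = PowerSeries.coeff k (PowerSeries.binomialSeries ℝ x) := by
  rw [PowerSeries.binomialSeries_coeff, Ring.choose_eq_smul, genBinom]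
  have : (descPochhammer ℤ k).smeval x = ∏ i ∈ Finset.range k, (x - i) := by
    rw [← Polynomial.aeval_eq_smeval, ← Polynomial.eval_map_algebraMap, descPochhammer_map,
      descPochhammer_eval_eq_prod_range]
  rw [this]
  simp [div_eq_inv_mul]

lemma lagL_eq_s16 (N : ℕ) (α : ℝ) (z : ℝ) :
    lagL (N : ℤ) α z =
      PowerSeries.coeff N (PowerSeries.binomialSeries ℝ ((N : ℝ) + α) * EE (-z)) := by
  rw [mul_comm, PowerSeries.coeff_mul, Finset.Nat.sum_antidiagonal_eq_sum_range_succ_mk]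
  simp only [lagL]
  rw [if_neg (by omega)]
  simp only [Int.toNat_natCast, Int.cast_natCast]
  refine Finset.sum_congr rfl fun k _ => ?_
  rw [genBinom_eq, coeff_EE, neg_pow z]
  ring

lemma hasDerivAt_EE (q : ℕ) (z : ℝ) :
    HasDerivAt (fun z => PowerSeries.coeff q (EE (-z)))
      (-PowerSeries.coeff q (PowerSeries.X * EE (-z))) z := by
  cases q with
  | zero => simpa [constCoeff_EE] using hasDerivAt_const z (1 : ℝ)
  | succ q =>
    rw [PowerSeries.coeff_succ_X_mul]
    simp only [coeff_EE]
    have h := (((hasDerivAt_id z).neg).pow (q + 1)).div_const ((Nat.factorial (q + 1) : ℕ) : ℝ)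
    refine h.congr_deriv ?_
    rw [Nat.factorial_succ]
    have : (Nat.factorial q : ℝ) ≠ 0 := by positivity
    simp
    field_simp

lemma hasDerivAt_coeff (F : PowerSeries ℝ) (N : ℕ) (z : ℝ) :
    HasDerivAt (fun z => PowerSeries.coeff N (F * EE (-z)))
      (-PowerSeries.coeff N (PowerSeries.X * F * EE (-z))) z := by
  have e : PowerSeries.X * F * EE (-z) = F * (PowerSeries.X * EE (-z)) := by ring
  rw [e]
  simp only [PowerSeries.coeff_mul N F]
  rw [← Finset.sum_neg_distrib]
  apply HasDerivAt.fun_sum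
  intro p _
  have := (hasDerivAt_EE p.2 z).const_mul (PowerSeries.coeff p.1 F)
  refine this.congr_deriv (by ring)

lemma iteratedDeriv_coeff (N i : ℕ) (F : PowerSeries ℝ) :
    iteratedDeriv i (fun z => PowerSeries.coeff N (F * EE (-z))) =
      fun z => (-1) ^ i * PowerSeries.coeff N (PowerSeries.X ^ i * F * EE (-z)) := by
  induction i with
  | zero => simp
  | succ i ih =>
    rw [iteratedDeriv_succ, ih]
    funext z
    have := (hasDerivAt_coeff (PowerSeries.X ^ i * F) N z).const_mul ((-1) ^ i)
    rw [this.deriv, pow_succ, pow_succ', mul_assoc PowerSeries.X]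
    ring

lemma sign_rev (n : ℕ) :
    ((Equiv.Perm.sign (Fin.revPerm : Equiv.Perm (Fin n)) : ℤ) : ℝ) = (-1) ^ (n * (n - 1) / 2) := by
  have key : ∀ n : ℕ, Matrix.det ((1 : Matrix (Fin n) (Fin n) ℝ).submatrix id Fin.revPerm)
      = (-1) ^ (n * (n - 1) / 2) := by
    intro n
    induction n with
    | zero => simp
    | succ n ih =>
      rw [Matrix.det_succ_row_zero, Finset.sum_eq_single (Fin.last n)]
      · have : (((1 : Matrix (Fin (n + 1)) (Fin (n + 1)) ℝ).submatrix id Fin.revPerm).submatrix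
            Fin.succ (Fin.last n).succAbove) =
            ((1 : Matrix (Fin n) (Fin n) ℝ).submatrix id Fin.revPerm) := by
          ext i j
          simp [Matrix.one_apply, Fin.ext_iff, Fin.val_rev]
          congr 1
          simp
          omega
        rw [this, ih]
        have h1 : ((1 : Matrix (Fin (n + 1)) (Fin (n + 1)) ℝ).submatrix id Fin.revPerm)
            0 (Fin.last n) = 1 := by
          change (1 : Matrix (Fin (n + 1)) (Fin (n + 1)) ℝ) 0 (Fin.rev (Fin.last n)) = 1
          rw [Fin.rev_last]
          exact Matrix.one_apply_eq 0
        rw [h1, mul_one, Fin.val_last, ← pow_add]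
        congr 1
        have h2 := Finset.sum_range_succ (fun i => i) n
        rw [Finset.sum_range_id, Finset.sum_range_id] at h2
        omega
      · intro b _ hb
        have : (0 : Fin (n+1)) ≠ Fin.rev b := by
          intro h
          apply hb
          rw [← Fin.rev_rev b, ← h]
          simp
        simp [this]
      · simp
  have := key n
  rwa [Matrix.det_permute', Matrix.det_one, mul_one] at this

lemma genLag_eq_s16 (m n : ℕ) (μ z : ℝ) :
    genLag (m : ℤ) n μ z = (-1) ^ (n * (n - 1) / 2) *
      TT n (m + 1) (PowerSeries.binomialSeries ℝ ((m : ℝ) + n + μ + 1) * EE (-z)) := by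
  set B := PowerSeries.binomialSeries ℝ ((m : ℝ) + n + μ + 1) with hB
  have h1 : lagL ((m : ℤ) + n) (μ + 1) =
      fun z => PowerSeries.coeff (m + n) (B * EE (-z)) := by
    funext z
    have := lagL_eq_s16 (m + n) (μ + 1) z
    push_cast at this
    rw [this, hB]
    congr 3
    ring
  rw [genLag, h1]
  simp only [iteratedDeriv_coeff]
  have h2 : (Matrix.of fun j k : Fin n => (-1 : ℝ) ^ ((j : ℕ) + (k : ℕ)) *
      PowerSeries.coeff (m + n) (PowerSeries.X ^ ((j : ℕ) + (k : ℕ)) * B * EE (-z))) =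
      Matrix.of fun j k : Fin n => (-1 : ℝ) ^ (k : ℕ) * (Matrix.of fun j k : Fin n =>
        (-1 : ℝ) ^ (j : ℕ) * ((Matrix.of fun j k : Fin n => PowerSeries.coeff (m + 1 + (k : ℕ))
          (PowerSeries.X ^ (j : ℕ) * (B * EE (-z)))).submatrix id Fin.revPerm) j k) j k := by
    ext j k
    simp only [Matrix.of_apply, Matrix.submatrix_apply, id, Fin.revPerm_apply]
    rw [← mul_assoc, pow_add, mul_comm ((-1 : ℝ) ^ (j : ℕ))]
    congr 1
    have e1 : m + n = (m + 1 + (Fin.rev k : ℕ)) + (k : ℕ) := by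
      rw [Fin.val_rev]; omega
    have e2 : PowerSeries.X ^ ((j : ℕ) + (k : ℕ)) * B * EE (-z) =
      PowerSeries.X ^ (k : ℕ) * (PowerSeries.X ^ (j : ℕ) * (B * EE (-z))) := by ring
    rw [e1, e2, PowerSeries.coeff_X_pow_mul]
  rw [h2, Matrix.det_mul_row, Matrix.det_mul_column, Matrix.det_permute', sign_rev, TT]
  rw [← mul_assoc, ← Finset.prod_mul_distrib]
  simp [← mul_pow]

/-- Row operations. -/
lemma TT_row (n M : ℕ) (H : PowerSeries ℝ) :
    TT n M H = Matrix.det (Matrix.of fun j k : Fin n =>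
      PowerSeries.coeff (M + (k : ℕ)) ((1 + PowerSeries.X) ^ (j : ℕ) * H)) := by
  have hU : Matrix.det (Matrix.of fun j l : Fin n => ((Nat.choose (j : ℕ) (l : ℕ) : ℕ) : ℝ)) = 1 := by
    rw [Matrix.det_of_isLowerTriangular]
    · simp
    · intro i j hij
      have : (i : ℕ) < (j : ℕ) := hij
      simp [Nat.choose_eq_zero_of_lt this]
  have hP : (Matrix.of fun j k : Fin n =>
      PowerSeries.coeff (M + (k : ℕ)) ((1 + PowerSeries.X) ^ (j : ℕ) * H)) =
      (Matrix.of fun j l : Fin n => ((Nat.choose (j : ℕ) (l : ℕ) : ℕ) : ℝ)) *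
      (Matrix.of fun j k : Fin n =>
        PowerSeries.coeff (M + (k : ℕ)) (PowerSeries.X ^ (j : ℕ) * H)) := by
    ext j k
    simp only [Matrix.mul_apply, Matrix.of_apply]
    rw [Fin.sum_univ_eq_sum_range (fun l => ((Nat.choose (j : ℕ) l : ℕ) : ℝ) *
      PowerSeries.coeff (M + (k : ℕ)) (PowerSeries.X ^ l * H)) n]
    rw [← Finset.sum_subset (Finset.range_subset_range.2 (show (j : ℕ) + 1 ≤ n from j.2))]
    · rw [add_comm 1, add_pow, Finset.sum_mul, map_sum]
      refine Finset.sum_congr rfl fun l _ => ?_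
      have : PowerSeries.X ^ l * 1 ^ ((j : ℕ) - l) * ((Nat.choose (j : ℕ) l : ℕ) : PowerSeries ℝ) * H
        = ((Nat.choose (j : ℕ) l : ℕ) : ℝ) • (PowerSeries.X ^ l * H) := by
        rw [one_pow, Nat.cast_smul_eq_nsmul, nsmul_eq_mul]
        ring
      rw [this, map_smul, smul_eq_mul]
    · intro l _ hl
      rw [Nat.choose_eq_zero_of_lt (by simpa using hl)]
      simp
  rw [hP, Matrix.det_mul, hU, one_mul, TT]

lemma coeff_one_add_pow (p k : ℕ) :
    PowerSeries.coeff k ((1 + PowerSeries.X : PowerSeries ℝ) ^ p) = (Nat.choose p k : ℝ) := by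
  rw [← PowerSeries.binomialSeries_nat (R := ℝ), PowerSeries.binomialSeries_coeff,
    Ring.choose_natCast]
  simp

lemma coeff_sym_aux (p q : ℕ) (w : ℝ) :
    (Nat.factorial q : ℝ) * w ^ p *
      PowerSeries.coeff q ((1 + PowerSeries.X) ^ p * EE w) =
    ∑ i ∈ Finset.range (p + q + 1), if i ≤ p ∧ i ≤ q then
      (Nat.factorial p : ℝ) * (Nat.factorial q) * w ^ (p + q - i) /
        ((Nat.factorial i) * (Nat.factorial (p - i)) * (Nat.factorial (q - i))) else 0 := by
  rw [PowerSeries.coeff_mul, Finset.Nat.sum_antidiagonal_eq_sum_range_succ_mk, Finset.mul_sum]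
  rw [← Finset.sum_subset (Finset.range_subset_range.2 (show q + 1 ≤ p + q + 1 by omega))]
  · refine Finset.sum_congr rfl fun i hi => ?_
    have hq : i ≤ q := by simpa [Nat.lt_succ_iff] using hi
    simp only [coeff_one_add_pow, coeff_EE]
    by_cases hp : i ≤ p
    · rw [if_pos ⟨hp, hq⟩, Nat.cast_choose ℝ hp, show p + q - i = p + (q - i) by omega, pow_add]
      have : ∀ n : ℕ, (Nat.factorial n : ℝ) ≠ 0 := fun n => by positivity
      have h1 := this i
      have h2 := this (p - i)
      have h3 := this (q - i)
      field_simp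
    · rw [if_neg (by tauto), Nat.choose_eq_zero_of_lt (by omega)]
      simp
  · intro i _ hi
    rw [if_neg]
    simp at hi
    omega

lemma coeff_sym (p q : ℕ) (w : ℝ) :
    (Nat.factorial q : ℝ) * (w ^ p *
      PowerSeries.coeff q ((1 + PowerSeries.X) ^ p * EE w)) =
    (Nat.factorial p : ℝ) * (w ^ q *
      PowerSeries.coeff p ((1 + PowerSeries.X) ^ q * EE w)) := by
  rw [← mul_assoc, ← mul_assoc, coeff_sym_aux, coeff_sym_aux, add_comm q p]
  refine Finset.sum_congr rfl fun i _ => ?_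
  by_cases h : i ≤ p ∧ i ≤ q
  · rw [if_pos h, if_pos h.symm]
    ring
  · rw [if_neg h, if_neg fun h' => h h'.symm]

lemma TT_sym (n a b : ℕ) (hab : a < b) (w : ℝ) (hn : 1 ≤ n) :
    TT n b ((1 + PowerSeries.X) ^ a * EE w) =
      (∏ i ∈ Finset.range n, (Nat.factorial (a + i) : ℝ) / (Nat.factorial (b + i))) *
        w ^ (n * (b - a)) * TT n a ((1 + PowerSeries.X) ^ b * EE w) := by
  rw [TT_row n b, TT_row n a]
  simp only [← mul_assoc, ← pow_add]
  rcases eq_or_ne w 0 with rfl | hw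
  · rw [zero_pow (by have : 0 < b - a := by omega
                     positivity)]
    rw [mul_zero, zero_mul]
    apply Matrix.det_eq_zero_of_row_eq_zero (⟨0, hn⟩ : Fin n)
    intro k
    simp only [Matrix.of_apply, EE_zero, mul_one, coeff_one_add_pow]
    rw [Nat.choose_eq_zero_of_lt (by simp; omega)]
    simp
  · set P := Matrix.of fun j k : Fin n =>
      PowerSeries.coeff (b + (k : ℕ)) ((1 + PowerSeries.X) ^ ((j : ℕ) + a) * EE w) with hP
    set Q := Matrix.of fun j k : Fin n =>
      PowerSeries.coeff (a + (k : ℕ)) ((1 + PowerSeries.X) ^ ((j : ℕ) + b) * EE w) with hQ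
    have h : (Matrix.of fun j k : Fin n => (Nat.factorial (b + (k : ℕ)) : ℝ) *
        (Matrix.of fun j k : Fin n => w ^ (a + (j : ℕ)) * P j k) j k) =
        (Matrix.of fun j k : Fin n => (Nat.factorial (a + (j : ℕ)) : ℝ) *
        (Matrix.of fun j k : Fin n => w ^ (b + (k : ℕ)) * Q.transpose j k) j k) := by
      ext j k
      simp only [Matrix.of_apply, Matrix.transpose_apply, hP, hQ]
      rw [add_comm (j : ℕ) a, add_comm (k : ℕ) b]
      exact coeff_sym _ _ _
    have h' := congrArg Matrix.det h
    rw [Matrix.det_mul_row, Matrix.det_mul_column, Matrix.det_mul_column, Matrix.det_mul_row,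
      Matrix.det_transpose] at h'
    rw [Fin.prod_univ_eq_prod_range (fun i => (Nat.factorial (b + i) : ℝ)),
      Fin.prod_univ_eq_prod_range (fun i => (Nat.factorial (a + i) : ℝ)),
      Fin.prod_univ_eq_prod_range (fun i => w ^ (a + i)),
      Fin.prod_univ_eq_prod_range (fun i => w ^ (b + i))] at h'
    have h3 : ∏ i ∈ Finset.range n, w ^ (b + i) =
        w ^ (n * (b - a)) * ∏ i ∈ Finset.range n, w ^ (a + i) := by
      have : ∀ i, w ^ (b + i) = w ^ (b - a) * w ^ (a + i) := by
        intro i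
        rw [← pow_add]
        congr 1
        omega
      simp only [this]
      rw [Finset.prod_mul_distrib, Finset.prod_const, Finset.card_range, ← pow_mul, mul_comm n]
    rw [h3] at h'
    rw [Finset.prod_div_distrib]
    have h4 : ∏ i ∈ Finset.range n, w ^ (a + i) ≠ 0 :=
      Finset.prod_ne_zero_iff.2 fun i _ => pow_ne_zero _ hw
    have h5 : ∏ i ∈ Finset.range n, (Nat.factorial (b + i) : ℝ) ≠ 0 :=
      Finset.prod_ne_zero_iff.2 fun i _ => by positivity
    apply mul_left_cancel₀ (mul_ne_zero h5 h4)
    rw [mul_assoc, h']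
    field_simp

lemma det_tri (n : ℕ) (H : PowerSeries ℝ) (h : PowerSeries.constantCoeff H = 1) :
    Matrix.det (Matrix.of fun i j : Fin n =>
      PowerSeries.coeff (i : ℕ) (PowerSeries.X ^ (j : ℕ) * H)) = 1 := by
  rw [Matrix.det_of_isLowerTriangular]
  · apply Finset.prod_eq_one
    intro i _
    simp [PowerSeries.coeff_X_pow_mul', h]
  · intro i j hij
    have : (i : ℕ) < (j : ℕ) := hij
    rw [Matrix.of_apply, PowerSeries.coeff_X_pow_mul', if_neg (by omega)]

lemma TT_zero (n : ℕ) (H : PowerSeries ℝ) (h : PowerSeries.constantCoeff H = 1) :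
    TT n 0 H = 1 := by
  rw [TT, ← Matrix.det_transpose, ← det_tri n H h]
  congr 1
  ext i j
  simp

lemma TT_EE (n b : ℕ) (w : ℝ) :
    TT n b (EE w) =
      (∏ i ∈ Finset.range n, (Nat.factorial i : ℝ) / (Nat.factorial (b + i))) * w ^ (n * b) := by
  rcases Nat.eq_zero_or_pos n with rfl | hn
  · simp [TT]
  rcases Nat.eq_zero_or_pos b with rfl | hb
  · rw [TT_zero _ _ (constCoeff_EE w)]
    rw [mul_zero, pow_zero, mul_one, Finset.prod_eq_one]
    intro i _
    rw [zero_add]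
    exact div_self (by positivity)
  have := TT_sym n 0 b hb w hn
  rw [TT_zero] at this
  · simpa using this
  · simp [constCoeff_EE]

lemma TT_ne_zero (n a b : ℕ) (hab : a ≤ b) :
    TT n a ((1 + PowerSeries.X) ^ b) ≠ 0 := by
  rw [TT_row]
  have h : (Matrix.of fun j k : Fin n => (Nat.factorial (a + (k : ℕ)) : ℝ) *
      (Matrix.of fun j k : Fin n => PowerSeries.coeff (a + (k : ℕ))
        ((1 + PowerSeries.X : PowerSeries ℝ) ^ (j : ℕ) * (1 + PowerSeries.X) ^ b)) j k) =
      (Matrix.of fun j k : Fin n => (Nat.factorial (b + (j : ℕ)) : ℝ) *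
        (Matrix.of fun j k : Fin n => PowerSeries.coeff (b - a + (k : ℕ))
        (PowerSeries.X ^ (j : ℕ) * EE 1)).transpose j k) := by
    ext j k
    simp only [Matrix.of_apply, Matrix.transpose_apply]
    rw [← pow_add, coeff_one_add_pow, PowerSeries.coeff_X_pow_mul']
    have f : ∀ n : ℕ, (Nat.factorial n : ℝ) ≠ 0 := fun n => by positivity
    by_cases hk : (k : ℕ) ≤ b - a + j
    · rw [if_pos hk, coeff_EE, Nat.cast_choose ℝ (by omega), add_comm (j : ℕ) b,
        show b + (j : ℕ) - (a + k) = b - a + j - k by omega]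
      have h1 := f (a + k)
      have h2 := f (b - a + j - k)
      field_simp
      simp
    · rw [if_neg hk, Nat.choose_eq_zero_of_lt (by omega)]
      simp
  have h' := congrArg Matrix.det h
  rw [Matrix.det_mul_row, Matrix.det_mul_column, Matrix.det_transpose] at h'
  intro h0
  rw [h0, mul_zero] at h'
  have h2 := TT_EE n (b - a) 1
  rw [TT] at h2
  rw [h2] at h'
  symm at h'
  revert h'
  refine mul_ne_zero ?_ (mul_ne_zero ?_ ?_)
  · exact Finset.prod_ne_zero_iff.2 fun i _ => by positivity
  · exact Finset.prod_ne_zero_iff.2 fun i _ => by positivity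
  · simp

lemma coeff_mul_X (K i : ℕ) (hi : i < K) (F H : PowerSeries ℝ) :
    PowerSeries.coeff i (F * H) = ∑ l ∈ Finset.range K,
      PowerSeries.coeff i (PowerSeries.X ^ l * H) * PowerSeries.coeff l F := by
  rw [PowerSeries.coeff_mul, Finset.Nat.sum_antidiagonal_eq_sum_range_succ_mk]
  rw [← Finset.sum_subset (Finset.range_subset_range.2 (show i + 1 ≤ K from hi))]
  · refine Finset.sum_congr rfl fun l hl => ?_
    have : l ≤ i := by simpa [Nat.lt_succ_iff] using hl
    rw [PowerSeries.coeff_X_pow_mul', if_pos this, mul_comm]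
  · intro l _ hl
    rw [PowerSeries.coeff_X_pow_mul', if_neg, zero_mul]
    simpa [Nat.lt_succ_iff] using hl

/-- Duality (complementary minors), up to a universal sign. -/
lemma TT_dual (n M : ℕ) : ∃ ε : ℝ, ∀ H G : PowerSeries ℝ, PowerSeries.constantCoeff H = 1 →
    H * G = 1 → TT n M H = ε * TT M n G := by
  let e1 : Fin M ⊕ Fin n ≃ Fin (M + n) := finSumFinEquiv
  let e3 : Fin M ⊕ Fin n ≃ Fin (M + n) :=
    (Equiv.sumComm _ _).trans (finSumFinEquiv.trans (finCongr (Nat.add_comm n M)))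
  refine ⟨((Equiv.Perm.sign (e3.trans e1.symm) : ℤ) : ℝ), fun H G h0 hHG => ?_⟩
  let L : PowerSeries ℝ → Matrix (Fin (M + n)) (Fin (M + n)) ℝ := fun H =>
    Matrix.of fun i j => PowerSeries.coeff (i : ℕ) (PowerSeries.X ^ (j : ℕ) * H)
  have hLL : L H * L G = 1 := by
    ext i j
    simp only [L, Matrix.mul_apply, Matrix.of_apply]
    rw [Fin.sum_univ_eq_sum_range (fun l => PowerSeries.coeff (i : ℕ) (PowerSeries.X ^ l * H) *
      PowerSeries.coeff l (PowerSeries.X ^ (j : ℕ) * G)) (M + n),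
      ← coeff_mul_X (M + n) i i.2, mul_assoc, mul_comm G, hHG, mul_one, PowerSeries.coeff_X_pow,
      Matrix.one_apply]
    simp [Fin.ext_iff]
  have hL : (L H).det = 1 := det_tri _ H h0
  have hdet : ((L H).submatrix e1 e3).det =
      ((Equiv.Perm.sign (e3.trans e1.symm) : ℤ) : ℝ) := by
    have : (L H).submatrix e1 e3 =
        ((L H).submatrix e1 e1).submatrix id (e3.trans e1.symm) := by
      ext i j
      simp
    rw [this, Matrix.det_permute', Matrix.det_submatrix_equiv_self, hL, mul_one]
  have hprod : (L H).submatrix e1 e3 * (L G).submatrix e3 e1 = 1 := by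
    rw [Matrix.submatrix_mul_equiv, hLL]
    simp
  set P := (L H).submatrix e1 e3 with hP
  set Q := (L G).submatrix e3 e1 with hQ
  have hblock : P * Matrix.fromBlocks Q.toBlocks₁₁ 0 Q.toBlocks₂₁ 1 =
      Matrix.fromBlocks 1 P.toBlocks₁₂ 0 P.toBlocks₂₂ := by
    rw [← Matrix.fromBlocks_toBlocks P, ← Matrix.fromBlocks_toBlocks Q,
      Matrix.fromBlocks_multiply, ← Matrix.fromBlocks_one, Matrix.fromBlocks_inj] at hprod
    conv_lhs => rw [← Matrix.fromBlocks_toBlocks P]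
    rw [Matrix.fromBlocks_multiply]
    simp [hprod.1, hprod.2.2.1]
  have hd := congrArg Matrix.det hblock
  rw [Matrix.det_mul, Matrix.det_fromBlocks_zero₁₂, Matrix.det_fromBlocks_zero₂₁, Matrix.det_one,
    Matrix.det_one, mul_one, one_mul, hdet] at hd
  have h1 : P.toBlocks₂₂.det = TT n M H := by
    rw [TT, ← Matrix.det_transpose]
    congr 1
  have h2 : Q.toBlocks₁₁.det = TT M n G := by
    rw [TT, ← Matrix.det_transpose]
    congr 1
  rw [← h1, ← h2, hd]

/-- The constant `∏ i!/(M+i)!`. -/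
def kap (n M : ℕ) : ℝ := ∏ i ∈ Finset.range n, (Nat.factorial i : ℝ) / (Nat.factorial (M + i))

lemma kap_ne_zero (n M : ℕ) : kap n M ≠ 0 :=
  Finset.prod_ne_zero_iff.2 fun i _ => by positivity

lemma kap_div (n a b : ℕ) :
    ∏ i ∈ Finset.range n, (Nat.factorial (a + i) : ℝ) / (Nat.factorial (b + i)) =
      kap n b / kap n a := by
  rw [kap, kap, ← Finset.prod_div_distrib]
  refine Finset.prod_congr rfl fun i _ => ?_
  have f : ∀ n : ℕ, (Nat.factorial n : ℝ) ≠ 0 := fun n => by positivity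
  have h1 := f i
  have h2 := f (a + i)
  have h3 := f (b + i)
  field_simp

lemma cmn_eq (m n : ℕ) :
    cmn m n = (-1) ^ (n * (n - 1) / 2) * (-1) ^ (n * (m + 1)) * kap n (m + 1) := by
  rw [cmn, kap, ← pow_add]
  congr 1
  · congr 1
    have h2 := Finset.sum_range_succ (fun i => i) n
    rw [Finset.sum_range_id, Finset.sum_range_id] at h2
    have h3 : n * (2 * m + 1 + n) = (n + 1) * (n + 1 - 1) + 2 * (n * m) := by
      rw [Nat.add_sub_cancel]; ring
    have h4 : n * (m + 1) = n * m + n := by ring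
    omega
  · refine Finset.prod_congr rfl fun i _ => ?_
    rw [show m + i + 1 = m + 1 + i by omega]

lemma neg_one_sq_pow (k : ℕ) : ((-1 : ℝ)) ^ k * (-1) ^ k = 1 := by
  rw [← mul_pow]; simp

lemma TT_EE' (n b : ℕ) (w : ℝ) : TT n b (EE w) = kap n b * w ^ (n * b) := TT_EE n b w

/-- The dual formula with explicit constant. -/
lemma TT_neg (n M r : ℕ) (z : ℝ) :
    TT n M (PowerSeries.binomialSeries ℝ (-(r : ℝ)) * EE (-z)) =
      kap n M * (-1) ^ (n * M) / kap M n * TT M n ((1 + PowerSeries.X) ^ r * EE z) := by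
  obtain ⟨ε, hε⟩ := TT_dual n M
  have h1 := hε (EE (-1)) (EE 1) (constCoeff_EE _) (by simpa using EE_mul_neg (-1))
  rw [TT_EE', TT_EE', one_pow, mul_one] at h1
  have h2 := kap_ne_zero M n
  have h3 : ε = kap n M * (-1) ^ (n * M) / kap M n := by
    rw [h1]; field_simp
  rw [← h3]
  apply hε
  · simp [constCoeff_EE]
  · rw [← PowerSeries.binomialSeries_nat (R := ℝ)]
    calc _ = (PowerSeries.binomialSeries ℝ (-(r : ℝ)) * PowerSeries.binomialSeries ℝ (r : ℝ)) *
          (EE z * EE (-z)) := by ring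
      _ = 1 := by
        rw [← PowerSeries.binomialSeries_add, EE_mul_neg]
        simp

/-- factorisation of `T_{m,n}^{(μ)}` at negative integer parameter values. -/
theorem genLag_factorisation (m n : ℕ) (hn : 1 ≤ n) :
    (∀ j : ℕ, 1 ≤ j → j ≤ m →
      (∀ z : ℝ, genLag (m : ℤ) n (-(n : ℝ) - j) z
          = (cmn m n / cmn (m - j) n) * z ^ (n * j) *
              genLag ((m : ℤ) - j) n ((j : ℝ) - n) z)
        ∧ genLag ((m : ℤ) - j) n ((j : ℝ) - n) 0 ≠ 0)
    ∧ (∀ z : ℝ, genLag (m : ℤ) n (-(m : ℝ) - n - 1) z = cmn m n * z ^ (n * (m + 1)))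
    ∧ (∀ j : ℕ, 2 ≤ j → j ≤ n →
      (∀ z : ℝ, genLag (m : ℤ) n (-(m : ℝ) - n - j) z
          = (cmn m n / cmn m (j - 1)) * z ^ ((m + 1) * (n + 1 - j)) *
              genLag (m : ℤ) (j - 1) (-(m : ℝ) - n - j) z)
        ∧ genLag (m : ℤ) (j - 1) (-(m : ℝ) - n - j) 0 ≠ 0) := by
  refine ⟨?_, ?_, ?_⟩
  · intro j hj1 hjm
    obtain ⟨a, rfl⟩ := Nat.exists_eq_add_of_le' hjm
    have e1 : ((a + j : ℕ) : ℤ) - j = (a : ℤ) := by push_cast; ring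
    have e2 : a + j - j = a := by omega
    rw [e1, e2]
    have hR : ∀ z, genLag (a : ℤ) n ((j : ℝ) - n) z = (-1) ^ (n * (n - 1) / 2) *
        TT n (a + 1) ((1 + PowerSeries.X) ^ (a + j + 1) * EE (-z)) := by
      intro z
      rw [genLag_eq_s16, ← PowerSeries.binomialSeries_nat (R := ℝ)]
      congr 4
      push_cast
      ring
    constructor
    · intro z
      rw [hR, genLag_eq_s16]
      have e3 : (((a + j : ℕ) : ℝ) + n + (-(n : ℝ) - j) + 1) = ((a + 1 : ℕ) : ℝ) := by
        push_cast
        ring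
      rw [e3, PowerSeries.binomialSeries_nat, TT_sym n (a + 1) (a + j + 1) (by omega) _ hn,
        kap_div, cmn_eq, cmn_eq, show a + j + 1 - (a + 1) = j by omega, neg_pow z,
        show n * (a + j + 1) = n * (a + 1) + n * j by ring, pow_add (-1 : ℝ) (n * (a + 1))]
      have h1 := kap_ne_zero n (a + 1)
      have h2 : ((-1 : ℝ)) ^ (n * (a + 1)) ≠ 0 := pow_ne_zero _ (by norm_num)
      have h3 : ((-1 : ℝ)) ^ (n * (n - 1) / 2) ≠ 0 := pow_ne_zero _ (by norm_num)
      field_simp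
    · rw [hR, neg_zero, EE_zero, mul_one]
      exact mul_ne_zero (pow_ne_zero _ (by norm_num)) (TT_ne_zero _ _ _ (by omega))
  · intro z
    rw [genLag_eq_s16]
    have e3 : (m : ℝ) + n + (-(m : ℝ) - n - 1) + 1 = 0 := by ring
    rw [e3, PowerSeries.binomialSeries_zero, one_mul, TT_EE', cmn_eq, neg_pow z]
    ring
  · intro j hj2 hjn
    obtain ⟨r, rfl⟩ := Nat.exists_eq_add_of_le' (show 1 ≤ j by omega)
    rw [Nat.add_sub_cancel]
    have hL : ∀ z, genLag (m : ℤ) r (-(m : ℝ) - n - (r + 1 : ℕ)) z = (-1) ^ (r * (r - 1) / 2) *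
        (kap r (m + 1) * (-1) ^ (r * (m + 1)) / kap (m + 1) r *
          TT (m + 1) r ((1 + PowerSeries.X) ^ n * EE z)) := by
      intro z
      rw [genLag_eq_s16, ← TT_neg]
      congr 4
      push_cast
      ring
    constructor
    · intro z
      rw [hL, genLag_eq_s16]
      have e3 : (m : ℝ) + n + (-(m : ℝ) - n - (r + 1 : ℕ)) + 1 = -(r : ℝ) := by
        push_cast
        ring
      rw [e3, TT_neg, TT_sym (m + 1) r n (by omega) _ (by omega), kap_div, cmn_eq, cmn_eq,
        show n + 1 - (r + 1) = n - r by omega]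
      have h1 := kap_ne_zero r (m + 1)
      have h4 := kap_ne_zero (m + 1) r
      have h5 := kap_ne_zero (m + 1) n
      have h2 : ((-1 : ℝ)) ^ (r * (m + 1)) ≠ 0 := pow_ne_zero _ (by norm_num)
      have h3 : ((-1 : ℝ)) ^ (r * (r - 1) / 2) ≠ 0 := pow_ne_zero _ (by norm_num)
      field_simp
    · rw [hL, EE_zero, mul_one]
      refine mul_ne_zero (pow_ne_zero _ (by norm_num)) (mul_ne_zero (div_ne_zero (mul_ne_zero
        (kap_ne_zero _ _) (pow_ne_zero _ (by norm_num))) (kap_ne_zero _ _))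
        (TT_ne_zero _ _ _ (by omega)))
end
end

section
/- Let N ≥ k ≥ 2 be integers. Then the determinant B_k(z) = det[L_{N+k+1−i−j}^{(2k−1)}(−z)]_{i,j=1}^{k} (with L_n^{(α)} = 0 for n < 0) satisfies B_k(z) = T_{N−1,k}^{(0)}(−z) = (−1)^{⌊(N+k)/2⌋} · T_{k−1,N}^{(−2(k+N))}(z). -/
noncomputable section

open Finset

/-- Laguerre polynomials with natural index. -/
def lagN (n : ℕ) (α : ℝ) (z : ℝ) : ℝ :=
  ∑ k ∈ Finset.range (n + 1),
    (-1 : ℝ) ^ k * genBinom ((n : ℝ) + α) (n - k) * z ^ k / (Nat.factorial k)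

lemma lagL_nat (n : ℕ) (α z : ℝ) : lagL (n : ℤ) α z = lagN n α z := by
  simp [lagL, lagN]

lemma lagL_neg (n : ℤ) (hn : n < 0) (α z : ℝ) : lagL n α z = 0 := by
  simp [lagL, hn]

lemma genBinom_zero (x : ℝ) : genBinom x 0 = 1 := by simp [genBinom]

lemma lagN_zero (α z : ℝ) : lagN 0 α z = 1 := by
  simp [lagN, genBinom_zero]

lemma genBinom_pascal (x : ℝ) (m : ℕ) :
    genBinom (x + 1) (m + 1) = genBinom x m + genBinom x (m + 1) := by
  unfold genBinom
  rw [Finset.prod_range_succ', Finset.prod_range_succ (fun i : ℕ => x - (i : ℝ)), Nat.factorial_succ]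
  have h1 : ∀ i : ℕ, x + 1 - ((i + 1 : ℕ) : ℝ) = x - i := by intro i; push_cast; ring
  simp only [h1]
  have h2 : (Nat.factorial m : ℝ) ≠ 0 := by positivity
  have h3 : (m : ℝ) + 1 ≠ 0 := by positivity
  push_cast
  field_simp
  ring

lemma lagN_succ_sub (n : ℕ) (α z : ℝ) :
    lagN (n + 1) (α + 1) z - lagN n (α + 1) z = lagN (n + 1) α z := by
  unfold lagN
  rw [Finset.sum_range_succ _ (n + 1), Finset.sum_range_succ _ (n + 1)]
  simp only [Nat.sub_self, genBinom_zero]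
  rw [add_sub_right_comm, ← Finset.sum_sub_distrib]
  congr 1
  apply Finset.sum_congr rfl
  intro k hk
  have hk' : k ≤ n := by simpa [Nat.lt_succ_iff] using hk
  have e : n + 1 - k = (n - k) + 1 := by omega
  have hp := genBinom_pascal ((n : ℝ) + 1 + α) (n - k)
  rw [e]
  push_cast
  rw [← add_assoc ((n : ℝ) + 1) α 1, hp, show (n : ℝ) + (α + 1) = n + 1 + α by ring]
  ring

lemma lagL_sub (n : ℤ) (α z : ℝ) :
    lagL n (α + 1) z - lagL (n - 1) (α + 1) z = lagL n α z := by
  rcases lt_or_ge n 0 with h | h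
  · rw [lagL_neg _ h, lagL_neg _ h, lagL_neg _ (by omega)]; simp
  · obtain ⟨m, rfl⟩ := Int.eq_ofNat_of_zero_le h
    cases m with
    | zero =>
      rw [lagL_neg (_ - 1) (by simp), lagL_nat, lagL_nat, lagN_zero, lagN_zero]; simp
    | succ m =>
      rw [show ((m + 1 : ℕ) : ℤ) - 1 = (m : ℕ) by push_cast; ring]
      simp only [lagL_nat]
      exact lagN_succ_sub m α z

lemma lagN_hasDerivAt (n : ℕ) (α z : ℝ) :
    HasDerivAt (lagN (n + 1) α) (-(lagN n (α + 1) z)) z := by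
  have h : HasDerivAt (fun z => ∑ k ∈ Finset.range (n + 1 + 1),
    (-1 : ℝ) ^ k * genBinom (((n + 1 : ℕ) : ℝ) + α) (n + 1 - k) * z ^ k / (Nat.factorial k))
    (∑ k ∈ Finset.range (n + 1 + 1),
    (-1 : ℝ) ^ k * genBinom (((n + 1 : ℕ) : ℝ) + α) (n + 1 - k) * ((k : ℝ) * z ^ (k - 1))
      / (Nat.factorial k)) z := by
    apply HasDerivAt.fun_sum
    intro k _
    exact ((hasDerivAt_pow k z).const_mul _).div_const _
  have e : (∑ k ∈ Finset.range (n + 1 + 1),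
    (-1 : ℝ) ^ k * genBinom (((n + 1 : ℕ) : ℝ) + α) (n + 1 - k) * ((k : ℝ) * z ^ (k - 1))
      / (Nat.factorial k)) = -(lagN n (α + 1) z) := by
    rw [Finset.sum_range_succ', lagN, ← Finset.sum_neg_distrib]
    simp only [Nat.cast_zero, zero_mul, mul_zero, zero_div, add_zero]
    apply Finset.sum_congr rfl
    intro k _
    rw [Nat.factorial_succ, Nat.add_sub_add_right,
      show ((n + 1 : ℕ) : ℝ) + α = n + (α + 1) by push_cast; ring]
    have h2 : (Nat.factorial k : ℝ) ≠ 0 := by positivity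
    have h3 : (k : ℝ) + 1 ≠ 0 := by positivity
    push_cast
    field_simp
    ring
  rw [← e]
  exact h

lemma lagL_hasDerivAt (n : ℤ) (α z : ℝ) :
    HasDerivAt (lagL n α) (-(lagL (n - 1) (α + 1) z)) z := by
  rcases lt_or_ge n 0 with h | h
  · rw [lagL_neg _ (by omega), show lagL n α = fun _ => 0 from funext (lagL_neg n h α)]
    simpa using hasDerivAt_const z (0 : ℝ)
  · obtain ⟨m, rfl⟩ := Int.eq_ofNat_of_zero_le h
    cases m with
    | zero =>
      rw [lagL_neg (_ - 1) (by simp), show lagL ((0 : ℕ) : ℤ) α = fun _ => 1 from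
        funext fun z => by rw [lagL_nat, lagN_zero]]
      simpa using hasDerivAt_const z (1 : ℝ)
    | succ m =>
      rw [show ((m + 1 : ℕ) : ℤ) - 1 = (m : ℕ) by push_cast; ring,
        show lagL ((m + 1 : ℕ) : ℤ) α = lagN (m + 1) α from funext (lagL_nat _ _), lagL_nat]
      exact lagN_hasDerivAt m α z

lemma iteratedDeriv_lagL (n : ℤ) (α : ℝ) (j : ℕ) :
    iteratedDeriv j (lagL n α) = fun z => (-1) ^ j * lagL (n - j) (α + j) z := by
  induction j with
  | zero => simp
  | succ j ih =>
    rw [iteratedDeriv_succ, ih]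
    funext z
    rw [((lagL_hasDerivAt (n - j) (α + j) z).const_mul ((-1) ^ j)).deriv,
      show n - (j : ℤ) - 1 = n - ((j + 1 : ℕ) : ℤ) by push_cast; ring,
      show α + (j : ℝ) + 1 = α + ((j + 1 : ℕ) : ℝ) by push_cast; ring]
    ring

/-- Iterated contiguity relation. -/
lemma lagL_expand (p : ℕ) (m : ℤ) (α z : ℝ) :
    ∑ r ∈ Finset.range (p + 1), (-1 : ℝ) ^ r * (p.choose r) * lagL (m - r) (α + p) z
      = lagL m α z := by
  induction p generalizing α m with
  | zero => simp
  | succ p ih =>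
    rw [← lagL_sub m α z, ← ih m (α + 1), ← ih (m - 1) (α + 1), Finset.sum_range_succ',
      Finset.sum_range_succ' (fun r : ℕ => (-1 : ℝ) ^ r * ((p.choose r : ℕ) : ℝ) *
          lagL (m - (r : ℤ)) (α + 1 + (p : ℝ)) z) p]
    have e : ∑ r ∈ Finset.range (p + 1), (-1 : ℝ) ^ (r + 1) * (((p + 1).choose (r + 1) : ℕ) : ℝ) *
          lagL (m - ((r + 1 : ℕ) : ℤ)) (α + ((p + 1 : ℕ) : ℝ)) z
        = ∑ r ∈ Finset.range (p + 1), (-1 : ℝ) ^ (r + 1) * ((p.choose (r + 1) : ℕ) : ℝ) *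
          lagL (m - ((r + 1 : ℕ) : ℤ)) (α + 1 + (p : ℝ)) z
        - ∑ r ∈ Finset.range (p + 1), (-1 : ℝ) ^ r * ((p.choose r : ℕ) : ℝ) *
          lagL (m - 1 - (r : ℤ)) (α + 1 + (p : ℝ)) z := by
      rw [← Finset.sum_sub_distrib]
      apply Finset.sum_congr rfl
      intro r _
      rw [Nat.choose_succ_succ', show m - 1 - (r : ℤ) = m - ((r + 1 : ℕ) : ℤ) by push_cast; ring,
        show α + ((p + 1 : ℕ) : ℝ) = α + 1 + p by push_cast; ring]
      push_cast
      ring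
    rw [e, Finset.sum_range_succ (fun r => (-1 : ℝ) ^ (r + 1) * ((p.choose (r + 1) : ℕ) : ℝ) *
          lagL (m - ((r + 1 : ℕ) : ℤ)) (α + 1 + (p : ℝ)) z)]
    simp only [Nat.choose_succ_self, Nat.choose_zero_right]
    rw [show α + ((p + 1 : ℕ) : ℝ) = α + 1 + p by push_cast; ring]
    push_cast
    ring

/-- Unitriangular change of basis. -/
def triA (n : ℕ) : Matrix (Fin n) (Fin n) ℝ := Matrix.of fun i a =>
  if (i : ℕ) ≤ a then (-1 : ℝ) ^ ((a : ℕ) - i) * ((n - 1 - (i : ℕ)).choose ((a : ℕ) - i) : ℕ) else 0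

lemma det_triA (n : ℕ) : (triA n).det = 1 := by
  rw [Matrix.det_of_isUpperTriangular]
  · simp [triA]
  · intro i j hij
    have : ¬ ((i : ℕ) ≤ j) := by simpa using hij
    rw [triA, Matrix.of_apply, if_neg this]

lemma triA_sum (n : ℕ) (i : Fin n) (M : ℤ) (β z : ℝ) :
    ∑ a : Fin n, triA n i a * lagL (M - (a : ℕ)) (β + (n - 1)) z = lagL (M - (i : ℕ)) (β + (i : ℕ)) z := by
  obtain ⟨i, hi⟩ := i
  have h1 := Fin.sum_univ_eq_sum_range (fun a : ℕ => (if i ≤ a then (-1 : ℝ) ^ (a - i) *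
    ((n - 1 - i).choose (a - i) : ℕ) else 0) * lagL (M - (a : ℕ)) (β + (n - 1)) z) n
  simp only [triA, Matrix.of_apply]
  rw [h1, ← Finset.sum_range_add_sum_Ico _ hi.le, Finset.sum_eq_zero, zero_add,
    Finset.sum_Ico_eq_sum_range, ← lagL_expand (n - 1 - i), show n - 1 - i + 1 = n - i by omega]
  · apply Finset.sum_congr rfl
    intro r _
    have : β + (n - 1) = β + (i : ℝ) + ((n - 1 - i : ℕ) : ℝ) := by
      rw [Nat.sub_sub, Nat.cast_sub (by omega)]; push_cast; ring
    rw [← this]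
    simp [sub_sub]
  · intro a ha
    have : ¬ i ≤ a := by simpa using ha
    simp [this]

lemma det_shift (n : ℕ) (M : ℤ) (α z : ℝ) :
    Matrix.det (Matrix.of fun i j : Fin n =>
      lagL (M - (i : ℕ) - (j : ℕ)) (α + (2 * n - 2)) z)
    = Matrix.det (Matrix.of fun i j : Fin n =>
      lagL (M - ((i : ℕ) + (j : ℕ) : ℕ)) (α + ((i : ℕ) + (j : ℕ) : ℕ)) z) := by
  have e : (Matrix.of fun i j : Fin n =>
      lagL (M - ((i : ℕ) + (j : ℕ) : ℕ)) (α + ((i : ℕ) + (j : ℕ) : ℕ)) z)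
      = triA n * (Matrix.of fun i j : Fin n =>
      lagL (M - (i : ℕ) - (j : ℕ)) (α + (2 * n - 2)) z) * (triA n).transpose := by
    have e1 : triA n * (Matrix.of fun i j : Fin n =>
        lagL (M - (i : ℕ) - (j : ℕ)) (α + (2 * n - 2)) z) = Matrix.of fun i j : Fin n =>
        lagL (M - (i : ℕ) - (j : ℕ)) (α + (n - 1) + (i : ℕ)) z := by
      ext i j
      rw [Matrix.mul_apply]
      simp only [Matrix.of_apply]
      rw [sub_right_comm, ← triA_sum]
      apply Finset.sum_congr rfl
      intro a _
      rw [sub_right_comm]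
      congr 2
      ring
    rw [e1]
    ext i j
    rw [Matrix.mul_apply]
    simp only [Matrix.of_apply, Matrix.transpose_apply]
    rw [show M - (((i : ℕ) + (j : ℕ) : ℕ) : ℤ) = M - (i : ℕ) - (j : ℕ) by push_cast; ring,
      show α + (((i : ℕ) + (j : ℕ) : ℕ) : ℝ) = α + (i : ℕ) + (j : ℕ) by push_cast; ring,
      ← triA_sum]
    apply Finset.sum_congr rfl
    intro a _
    rw [mul_comm]
    congr 2
    ring
  rw [e, Matrix.det_mul, Matrix.det_mul, Matrix.det_transpose, det_triA]
  ring

lemma genLag_eq_s18 (m : ℤ) (n : ℕ) (μ z : ℝ) :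
    genLag m n μ z = Matrix.det (Matrix.of fun i j : Fin n =>
      lagL (m + n - (i : ℕ) - (j : ℕ)) (μ + 1 + (2 * n - 2)) z) := by
  rw [det_shift, genLag]
  simp only [iteratedDeriv_lagL]
  have := Matrix.det_mul_row (fun i : Fin n => (-1 : ℝ) ^ (i : ℕ)) (Matrix.of fun i j : Fin n =>
    (-1 : ℝ) ^ (i : ℕ) * lagL (m + n - ((i : ℕ) + (j : ℕ) : ℕ)) (μ + 1 + ((i : ℕ) + (j : ℕ) : ℕ)) z)
  have h2 := Matrix.det_mul_column (fun i : Fin n => (-1 : ℝ) ^ (i : ℕ)) (Matrix.of fun i j : Fin n =>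
    lagL (m + n - ((i : ℕ) + (j : ℕ) : ℕ)) (μ + 1 + ((i : ℕ) + (j : ℕ) : ℕ)) z)
  simp only [Matrix.of_apply] at this h2
  rw [h2, ← mul_assoc, ← Finset.prod_mul_distrib] at this
  have h3 : ∀ i : ℕ, (-1 : ℝ) ^ i * (-1) ^ i = 1 := by
    intro i; rw [← mul_pow]; simp
  simp only [h3, Finset.prod_const_one, one_mul] at this
  rw [← this]
  congr 1
  ext i j
  simp only [Matrix.of_apply]
  rw [pow_add]
  ring

/-- Generating function. -/
def genP (α z : ℝ) : PowerSeries ℝ := PowerSeries.mk fun n => lagN n α z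

lemma genP_sub (α z : ℝ) : genP α z = (1 - PowerSeries.X) * genP (α + 1) z := by
  ext n
  rw [sub_mul, one_mul, map_sub]
  cases n with
  | zero => simp [genP, lagN_zero]
  | succ n =>
    rw [PowerSeries.coeff_succ_X_mul]
    simp only [genP, PowerSeries.coeff_mk]
    rw [lagN_succ_sub]

lemma lagN_hasDerivAt' (n : ℕ) (α z : ℝ) :
    HasDerivAt (lagN n α) (-(PowerSeries.coeff n (PowerSeries.X * genP (α + 1) z))) z := by
  cases n with
  | zero =>
    rw [show lagN 0 α = fun _ => 1 from funext (lagN_zero α)]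
    simpa using hasDerivAt_const z (1 : ℝ)
  | succ n =>
    rw [PowerSeries.coeff_succ_X_mul]
    simpa [genP] using lagN_hasDerivAt n α z

lemma genP_zero : genP (-1) 0 = 1 := by
  ext n
  rw [PowerSeries.coeff_one]
  simp only [genP, PowerSeries.coeff_mk]
  cases n with
  | zero => simp [lagN_zero]
  | succ n =>
    rw [lagN, Finset.sum_range_succ', Finset.sum_eq_zero]
    · simp [genBinom, Finset.prod_range_succ]
    · intro k _; simp

lemma genP_mul_const (α β : ℝ) (h : α + β = -2) (z : ℝ) :
    genP α (-z) * genP β z = genP α 0 * genP β 0 := by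
  ext n
  have key : ∀ z : ℝ, HasDerivAt (fun z => PowerSeries.coeff n (genP α (-z) * genP β z)) 0 z := by
    intro z
    simp only [PowerSeries.coeff_mul, genP, PowerSeries.coeff_mk]
    have h1 : HasDerivAt (fun z => ∑ p ∈ Finset.HasAntidiagonal.antidiagonal n, lagN p.1 α (-z) * lagN p.2 β z)
        (∑ p ∈ Finset.HasAntidiagonal.antidiagonal n,
          ((PowerSeries.coeff p.1 (PowerSeries.X * genP (α + 1) (-z))) * lagN p.2 β z +
          lagN p.1 α (-z) * (-(PowerSeries.coeff p.2 (PowerSeries.X * genP (β + 1) z))))) z := by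
      apply HasDerivAt.fun_sum
      intro p _
      refine HasDerivAt.fun_mul ?_ (lagN_hasDerivAt' _ _ _)
      have := HasDerivAt.comp z (lagN_hasDerivAt' p.1 α (-z)) (hasDerivAt_neg z)
      rw [mul_neg_one, neg_neg] at this
      exact this
    convert h1 using 1
    have h2 : PowerSeries.coeff n (PowerSeries.X * genP (α + 1) (-z) * genP β z -
        genP α (-z) * (PowerSeries.X * genP (β + 1) z)) = 0 := by
      rw [genP_sub β, genP_sub α]
      have h3 : ∀ x : PowerSeries ℝ, x = 0 → PowerSeries.coeff n x = 0 := by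
        intro x hx
        rw [hx, map_zero]
      apply h3
      ring
    rw [map_sub, PowerSeries.coeff_mul, PowerSeries.coeff_mul, ← Finset.sum_sub_distrib] at h2
    rw [← h2]
    apply Finset.sum_congr rfl
    intro p _
    simp only [genP, PowerSeries.coeff_mk]
    ring
  have := is_const_of_deriv_eq_zero (fun z => (key z).differentiableAt) (fun z => (key z).deriv) z 0
  simpa using this

lemma genP_zero_mul (j : ℕ) : genP ((j : ℝ) - 1) 0 * genP (-1 - j) 0 = 1 := by
  induction j with
  | zero => simp [genP_zero]
  | succ j ih =>
    rw [genP_sub (-1 - ((j + 1 : ℕ) : ℝ))]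
    rw [genP_sub ((j : ℝ) - 1)] at ih
    refine Eq.trans ?_ ih
    rw [show ((j + 1 : ℕ) : ℝ) - 1 = j - 1 + 1 by push_cast; ring,
      show -1 - ((j + 1 : ℕ) : ℝ) + 1 = -1 - j by push_cast; ring]
    ring

lemma genP_mul (j : ℕ) (z : ℝ) : genP ((j : ℝ) - 1) (-z) * genP (-1 - j) z = 1 := by
  rw [genP_mul_const _ _ (by ring), genP_zero_mul]

/-- Determinant of an anti-triangular Hankel matrix. -/
lemma det_hankel (h : ℤ → ℝ) (h0 : h 0 = 1) (hneg : ∀ n < 0, h n = 0) (S : ℕ) :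
    Matrix.det (Matrix.of fun i j : Fin S => h ((S : ℤ) - 1 - (i : ℕ) - (j : ℕ)))
      = (-1) ^ (S / 2) := by
  induction S with
  | zero => simp
  | succ S ih =>
    rw [Matrix.det_succ_row _ (Fin.last S), Fin.sum_univ_succ, Finset.sum_eq_zero, add_zero]
    · have : (Matrix.of fun i j : Fin (S + 1) =>
          h (((S + 1 : ℕ) : ℤ) - 1 - (i : ℕ) - (j : ℕ))).submatrix
          (Fin.last S).succAbove (Fin.succAbove 0) =
          Matrix.of fun i j : Fin S => h ((S : ℤ) - 1 - (i : ℕ) - (j : ℕ)) := by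
        ext i j
        simp only [Matrix.submatrix_apply, Matrix.of_apply, Fin.succAbove_last, Fin.succAbove_zero,
          Fin.val_castSucc, Fin.val_succ]
        congr 1
        push_cast
        ring
      rw [this, ih]
      simp only [Matrix.of_apply, Fin.val_last, Fin.val_zero]
      rw [show ((S + 1 : ℕ) : ℤ) - 1 - S - ((0 : ℕ) : ℤ) = 0 by push_cast; ring, h0, mul_one,
        ← pow_add]
      rw [neg_one_pow_eq_pow_mod_two, neg_one_pow_eq_pow_mod_two (n := (S + 1) / 2)]
      congr 1
      obtain ⟨d, hd | hd⟩ := Nat.even_or_odd' S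
      · have h1 : S / 2 = d := by omega
        have h2 : (S + 1) / 2 = d := by omega
        rw [h1, h2]
        omega
      · have h1 : S / 2 = d := by omega
        have h2 : (S + 1) / 2 = d + 1 := by omega
        rw [h1, h2]
        omega
    · intro j _
      simp only [Matrix.of_apply, Fin.val_last, Fin.val_succ]
      rw [hneg _ (by push_cast; omega)]
      simp

/-- Complementary minors for Hankel matrices of reciprocal power series. -/
lemma hankel_dual (h g : ℤ → ℝ) (h0 : h 0 = 1) (hneg : ∀ n < 0, h n = 0)
    (gneg : ∀ n < 0, g n = 0)
    (hg : (PowerSeries.mk fun n : ℕ => h n) * (PowerSeries.mk fun n : ℕ => g n) = 1) (N k : ℕ) :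
    Matrix.det (Matrix.of fun i j : Fin k => h ((N : ℤ) + k - 1 - (i : ℕ) - (j : ℕ)))
      = (-1) ^ ((N + k) / 2) *
        Matrix.det (Matrix.of fun i j : Fin N => g ((N : ℤ) + k - 1 - (i : ℕ) - (j : ℕ))) := by
  have conv : ∀ i l : ℕ, i < k + N → l < k + N → ∑ j : Fin (k + N),
      h ((N : ℤ) + k - 1 - i - (j : ℕ)) * g ((j : ℕ) + l - ((N : ℤ) + k - 1)) =
      if i = l then 1 else 0 := by
    intro i l hi hl
    rw [Fin.sum_univ_eq_sum_range (fun j : ℕ =>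
      h ((N : ℤ) + k - 1 - i - (j : ℕ)) * g ((j : ℕ) + l - ((N : ℤ) + k - 1)))]
    have hsupp : ∀ j ∈ Finset.range (k + N), j ∉ Finset.Ico (k + N - 1 - l) (k + N - i) →
        h ((N : ℤ) + k - 1 - i - (j : ℕ)) * g ((j : ℕ) + l - ((N : ℤ) + k - 1)) = 0 := by
      intro j hj hj'
      rw [Finset.mem_Ico, not_and_or] at hj'
      rcases hj' with hj' | hj'
      · rw [gneg _ (by omega), mul_zero]
      · rw [hneg _ (by omega), zero_mul]
    rw [← Finset.sum_subset (s₁ := Finset.Ico (k + N - 1 - l) (k + N - i)) (fun j hj => by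
      simp only [Finset.mem_Ico, Finset.mem_range] at hj ⊢; omega) hsupp]
    rcases lt_or_ge l i with hli | hli
    · rw [Finset.Ico_eq_empty (by omega), if_neg (by omega), Finset.sum_empty]
    · have := congrArg (PowerSeries.coeff (l - i)) hg
      rw [PowerSeries.coeff_mul, PowerSeries.coeff_one, ← Finset.Nat.sum_antidiagonal_swap,
        Finset.Nat.sum_antidiagonal_eq_sum_range_succ_mk] at this
      simp only [PowerSeries.coeff_mk, Prod.fst_swap, Prod.snd_swap] at this
      rw [Finset.sum_Ico_eq_sum_range, show k + N - i - (k + N - 1 - l) = l - i + 1 by omega]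
      rw [show (if i = l then (1 : ℝ) else 0) = if l - i = 0 then 1 else 0 by
        congr 1; apply propext; omega, ← this]
      apply Finset.sum_congr rfl
      intro r hr
      have hr' := Finset.mem_range.1 hr
      congr 2 <;> omega
  let f : Fin k ⊕ Fin N ≃ Fin (k + N) := finSumFinEquiv
  let M : Matrix (Fin (k + N)) (Fin (k + N)) ℝ :=
    Matrix.of fun i j => h ((N : ℤ) + k - 1 - (i : ℕ) - (j : ℕ))
  let G : Matrix (Fin (k + N)) (Fin (k + N)) ℝ :=
    Matrix.of fun i j => g ((i : ℕ) + (j : ℕ) - ((N : ℤ) + k - 1))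
  have hMG : M * G = 1 := by
    ext i l
    rw [Matrix.mul_apply, Matrix.one_apply]
    simp only [M, G, Matrix.of_apply]
    rw [conv i l i.2 l.2]
    simp only [Fin.ext_iff]
  have hdM : M.det = (-1) ^ ((N + k) / 2) := by
    have := det_hankel h h0 hneg (k + N)
    rw [add_comm N k, ← this]
    simp only [M]
    congr 1
    ext i j
    simp only [Matrix.of_apply]
    congr 1
    push_cast
    ring
  let M' := M.submatrix f f
  let G' := G.submatrix f f
  have hMG' : M' * G' = 1 := by
    simp only [M', G']
    rw [Matrix.submatrix_mul_equiv, hMG, Matrix.submatrix_one_equiv]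
  have hb : M' * Matrix.fromBlocks 1 G'.toBlocks₁₂ 0 G'.toBlocks₂₂ =
      Matrix.fromBlocks M'.toBlocks₁₁ 0 M'.toBlocks₂₁ 1 := by
    rw [← Matrix.fromBlocks_toBlocks M', ← Matrix.fromBlocks_toBlocks G',
      Matrix.fromBlocks_multiply, ← Matrix.fromBlocks_one, Matrix.fromBlocks_inj] at hMG'
    obtain ⟨_, h12, _, h22⟩ := hMG'
    conv_lhs => rw [← Matrix.fromBlocks_toBlocks M']
    rw [Matrix.fromBlocks_multiply, h12, h22]
    simp
  have hd := congrArg Matrix.det hb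
  rw [Matrix.det_mul, Matrix.det_fromBlocks_zero₂₁, Matrix.det_fromBlocks_zero₁₂,
    Matrix.det_submatrix_equiv_self, hdM] at hd
  simp only [Matrix.det_one, one_mul, mul_one] at hd
  have e1 : M'.toBlocks₁₁ = Matrix.of fun i j : Fin k =>
      h ((N : ℤ) + k - 1 - (i : ℕ) - (j : ℕ)) := by
    ext i j
    simp [M', M, f, Matrix.toBlocks₁₁]
  have e2 : G'.toBlocks₂₂.det = Matrix.det (Matrix.of fun i j : Fin N =>
      g ((N : ℤ) + k - 1 - (i : ℕ) - (j : ℕ))) := by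
    rw [← Matrix.det_submatrix_equiv_self Fin.revPerm]
    congr 1
    ext i j
    simp only [G', G, f, Matrix.toBlocks₂₂, Matrix.submatrix_apply, Matrix.of_apply,
      finSumFinEquiv_apply_right, Fin.revPerm_apply, Fin.val_natAdd, Fin.val_rev]
    congr 1
    omega
  rw [← e1, ← hd, e2]

/-- the determinant `B_k(z)` in terms of generalised Laguerre polynomials. -/
theorem Bk_eq_genLag (N k : ℕ) (hk : 2 ≤ k) (hN : k ≤ N) (z : ℝ) :
    Matrix.det (Matrix.of fun i j : Fin k =>
        lagL ((N : ℤ) + k - 1 - (i : ℕ) - (j : ℕ)) (2 * (k : ℝ) - 1) (-z))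
        = genLag ((N : ℤ) - 1) k 0 (-z)
      ∧ Matrix.det (Matrix.of fun i j : Fin k =>
          lagL ((N : ℤ) + k - 1 - (i : ℕ) - (j : ℕ)) (2 * (k : ℝ) - 1) (-z))
        = (-1 : ℝ) ^ ((N + k) / 2) *
            genLag ((k : ℤ) - 1) N (-2 * ((k : ℝ) + N)) z := by
  constructor
  · rw [genLag_eq_s18]
    congr 1
    ext i j
    simp only [Matrix.of_apply]
    congr 1
    · push_cast; ring
    · ring
  · rw [genLag_eq_s18]
    have hg : (PowerSeries.mk fun n : ℕ => lagL n (2 * (k : ℝ) - 1) (-z)) *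
        (PowerSeries.mk fun n : ℕ => lagL n (-1 - 2 * (k : ℝ)) z) = 1 := by
      simp only [lagL_nat]
      have := genP_mul (2 * k) z
      push_cast at this
      exact this
    have hd := hankel_dual (fun n => lagL n (2 * (k : ℝ) - 1) (-z))
      (fun n => lagL n (-1 - 2 * (k : ℝ)) z)
      (by simpa [lagN_zero] using lagL_nat 0 (2 * (k : ℝ) - 1) (-z))
      (fun n hn => lagL_neg n hn _ _) (fun n hn => lagL_neg n hn _ _) hg N k
    rw [hd]
    congr 2
    ext i j
    simp only [Matrix.of_apply]
    congr 1
    · ring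
    · ring
end
end
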